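/- arXiv:1709.03268 — 6 statements merged into one kernel-verified Lean document; each statement's English description precedes it below -/
import Mathlib

section
/- Every regular sequence is selflinked: if x_1,...,x_n is an M-regular sequence on a finitely generated module M over a commutative Noetherian ring R, then the ideals a = (x_1,...,x_n) and a itself are linked by I = (x_1^2, x_2,...,x_n) over M, i.e., IM :_M a = aM. -/
open RingTheory.Sequence

/-- The colon submodule `N :_M a = {m ∈ M | a m ⊆ N}`. -/
def Submodule.colonBy {R M : Type*} [CommRing R] [AddCommGroup M] [Module R M]
    (N : Submodule R M) (a : Ideal R) : Submodule R M :=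
  ⨅ r ∈ a, N.comap (LinearMap.lsmul R M r)
/-- `a` and `b` are linked by `I` over `M`: `I ⊆ a ∩ b` is generated by an `M`-regular
sequence, `aM ≠ M ≠ bM`, `IM :_M a = bM` and `IM :_M b = aM`. -/
def Ideal.LinkedBy (R M : Type*) [CommRing R] [AddCommGroup M] [Module R M]
    (a b I : Ideal R) : Prop :=
  I ≤ a ⊓ b ∧
  (∃ rs : List R, I = Ideal.ofList rs ∧ RingTheory.Sequence.IsRegular M rs) ∧
  a • (⊤ : Submodule R M) ≠ ⊤ ∧ b • (⊤ : Submodule R M) ≠ ⊤ ∧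
  (I • ⊤ : Submodule R M).colonBy a = b • (⊤ : Submodule R M) ∧
  (I • ⊤ : Submodule R M).colonBy b = a • (⊤ : Submodule R M)

open scoped Pointwise

namespace RingTheory.Sequence

/-- In a short exact sequence, a sequence which is weakly regular on the outer terms is weakly
regular on the middle term. -/
theorem IsWeaklyRegular.of_shortExact {R A B C : Type*} [CommRing R] [AddCommGroup A]
    [AddCommGroup B] [AddCommGroup C] [Module R A] [Module R B] [Module R C] {rs : List R}
    {f : A →ₗ[R] B} {g : B →ₗ[R] C} (hf : Function.Injective f) (hfg : Function.Exact f g)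
    (hg : Function.Surjective g) (hA : IsWeaklyRegular A rs) (hC : IsWeaklyRegular C rs) :
    IsWeaklyRegular B rs := by
  induction rs generalizing A B C with
  | nil => exact .nil R B
  | cons r rs ih =>
    rw [isWeaklyRegular_cons_iff] at hA hC ⊢
    refine ⟨isSMulRegular_of_range_eq_ker hf hfg.linearMap_ker_eq.symm hA.1 hC.1,
      ih ?_ (QuotSMulTop.map_exact r hfg hg) (QuotSMulTop.map_surjective r hg) hA.2 hC.2⟩
    have h := QuotSMulTop.map_first_exact_on_four_term_exact_of_isSMulRegular_last
      ((LinearMap.exact_zero_iff_injective A f).mpr hf) hfg hC.1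
    rw [map_zero] at h
    exact (LinearMap.exact_zero_iff_injective _ _).mp h

variable {R M : Type*} [CommRing R] [AddCommGroup M] [Module R M] {x : R} {xs : List R}

/-- The first element of a weakly regular sequence is regular modulo the remaining ones. -/
theorem IsWeaklyRegular.isSMulRegular_head (h : IsWeaklyRegular M (x :: xs)) :
    IsSMulRegular (M ⧸ (Ideal.ofList xs • ⊤ : Submodule R M)) x := by
  rw [isSMulRegular_quotient_iff_mem_of_smul_mem]
  induction xs using List.reverseRecOn with
  | nil =>
    intro u hu
    simp only [Ideal.ofList_nil, Submodule.bot_smul, Submodule.mem_bot] at hu ⊢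
    exact ((isWeaklyRegular_cons_iff M x _).mp h).1.right_eq_zero_of_smul hu
  | append_singleton xs y ih =>
    intro u hu
    rw [← List.cons_append, isWeaklyRegular_append_iff, isWeaklyRegular_singleton_iff,
      isSMulRegular_quotient_iff_mem_of_smul_mem] at h
    obtain ⟨hxs, hy⟩ := h
    rw [Ideal.ofList_append, Ideal.ofList_singleton, Submodule.sup_smul,
      Submodule.ideal_span_singleton_smul] at hu ⊢
    obtain ⟨s, hs, t, ht, hst⟩ := Submodule.mem_sup.mp hu
    obtain ⟨w, -, rfl⟩ := (Submodule.mem_smul_pointwise_iff_exists _ _ _).mp ht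
    have hw : w ∈ (Ideal.ofList (x :: xs) • ⊤ : Submodule R M) := by
      apply hy
      rw [eq_sub_of_add_eq' hst, Ideal.ofList_cons_smul]
      exact sub_mem (Submodule.mem_sup_left (Submodule.smul_mem_pointwise_smul _ _ _ trivial))
        (Submodule.mem_sup_right hs)
    rw [Ideal.ofList_cons_smul] at hw
    obtain ⟨p, hp, s', hs', rfl⟩ := Submodule.mem_sup.mp hw
    obtain ⟨v, -, rfl⟩ := (Submodule.mem_smul_pointwise_iff_exists _ _ _).mp hp
    have huv : u - y • v ∈ (Ideal.ofList xs • ⊤ : Submodule R M) := by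
      apply ih hxs
      have : x • (u - y • v) = s + y • s' := by
        rw [smul_sub, ← hst, smul_add, smul_comm y x v]
        abel
      rw [this]
      exact add_mem hs (Submodule.smul_mem _ _ hs')
    rw [← sub_add_cancel u (y • v)]
    exact add_mem (Submodule.mem_sup_left huv)
      (Submodule.mem_sup_right (Submodule.smul_mem_pointwise_smul _ _ _ trivial))

/-- Squaring the first element of a weakly regular sequence keeps it weakly regular. -/
theorem IsWeaklyRegular.sq_head (h : IsWeaklyRegular M (x :: xs)) :
    IsWeaklyRegular M (x ^ 2 :: xs) := by
  rw [isWeaklyRegular_cons_iff] at h ⊢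
  obtain ⟨hx, hxs⟩ := h
  have hmul : (x • ⊤ : Submodule R M) ≤
      (x ^ 2 • ⊤ : Submodule R M).comap (LinearMap.lsmul R M x) := by
    intro m hm
    obtain ⟨w, -, rfl⟩ := (Submodule.mem_smul_pointwise_iff_exists _ _ _).mp hm
    rw [Submodule.mem_comap, LinearMap.lsmul_apply, smul_smul, ← sq]
    exact Submodule.smul_mem_pointwise_smul _ _ _ trivial
  have hle : (x ^ 2 • ⊤ : Submodule R M) ≤ (x • ⊤ : Submodule R M) := by
    intro m hm
    obtain ⟨w, -, rfl⟩ := (Submodule.mem_smul_pointwise_iff_exists _ _ _).mp hm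
    rw [sq, mul_smul]
    exact Submodule.smul_mem_pointwise_smul _ _ _ trivial
  refine ⟨hx.pow 2, IsWeaklyRegular.of_shortExact (f := Submodule.mapQ _ _ _ hmul)
    (g := Submodule.factor hle) ?_ ?_ (Submodule.factor_surjective hle) hxs hxs⟩
  · rw [injective_iff_map_eq_zero]
    intro q hq
    obtain ⟨m, rfl⟩ := Submodule.Quotient.mk_surjective _ q
    rw [Submodule.mapQ_apply, Submodule.Quotient.mk_eq_zero] at hq
    obtain ⟨w, -, hw⟩ := (Submodule.mem_smul_pointwise_iff_exists _ _ _).mp hq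
    rw [LinearMap.lsmul_apply, sq, mul_smul] at hw
    rw [Submodule.Quotient.mk_eq_zero, ← hx hw]
    exact Submodule.smul_mem_pointwise_smul _ _ _ trivial
  · intro q
    obtain ⟨m, rfl⟩ := Submodule.Quotient.mk_surjective _ q
    rw [← Submodule.mkQ_apply, Submodule.factor_mk, Submodule.mkQ_apply,
      Submodule.Quotient.mk_eq_zero]
    constructor
    · intro hm
      obtain ⟨w, -, rfl⟩ := (Submodule.mem_smul_pointwise_iff_exists _ _ _).mp hm
      exact ⟨Submodule.Quotient.mk w, rfl⟩
    · rintro ⟨q, hq⟩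
      obtain ⟨w, rfl⟩ := Submodule.Quotient.mk_surjective _ q
      rw [Submodule.mapQ_apply, Submodule.mkQ_apply, Submodule.Quotient.eq] at hq
      rw [← sub_sub_cancel (x • w) m]
      exact sub_mem (Submodule.smul_mem_pointwise_smul _ _ _ trivial) (hle hq)

end RingTheory.Sequence

theorem Submodule.mem_colonBy {R M : Type*} [CommRing R] [AddCommGroup M] [Module R M]
    {N : Submodule R M} {a : Ideal R} {m : M} : m ∈ N.colonBy a ↔ ∀ r ∈ a, r • m ∈ N := by
  simp [Submodule.colonBy]

theorem Ideal.ofList_sq_cons_le {R : Type*} [CommRing R] (x : R) (xs : List R) :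
    Ideal.ofList (x ^ 2 :: xs) ≤ Ideal.ofList (x :: xs) := by
  rw [Ideal.ofList_cons, Ideal.ofList_cons]
  exact sup_le_sup_right
    (Ideal.span_singleton_le_span_singleton.mpr (dvd_pow_self x two_ne_zero)) _

theorem Ideal.ofList_cons_mul_self_le {R : Type*} [CommRing R] (x : R) (xs : List R) :
    Ideal.ofList (x :: xs) * Ideal.ofList (x :: xs) ≤ Ideal.ofList (x ^ 2 :: xs) := by
  rw [Ideal.ofList_cons, Ideal.ofList_cons, Ideal.sup_mul, Ideal.mul_sup,
    Ideal.span_singleton_mul_span_singleton, ← sq x]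
  exact sup_le (sup_le_sup_left Ideal.mul_le_right _) (le_sup_of_le_right Ideal.mul_le_left)

theorem RingTheory.Sequence.IsWeaklyRegular.colonBy_eq {R M : Type*} [CommRing R]
    [AddCommGroup M] [Module R M] {x : R} {xs : List R} (h : IsWeaklyRegular M (x :: xs)) :
    (Ideal.ofList (x ^ 2 :: xs) • ⊤ : Submodule R M).colonBy (Ideal.ofList (x :: xs)) =
      Ideal.ofList (x :: xs) • (⊤ : Submodule R M) := by
  apply le_antisymm
  · intro m hm
    have hxm := Submodule.mem_colonBy.mp hm x (Ideal.subset_span List.mem_cons_self)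
    rw [Ideal.ofList_cons_smul] at hxm ⊢
    obtain ⟨p, hp, s, hs, hps⟩ := Submodule.mem_sup.mp hxm
    obtain ⟨w, -, rfl⟩ := (Submodule.mem_smul_pointwise_iff_exists _ _ _).mp hp
    have hmw : m - x • w ∈ (Ideal.ofList xs • ⊤ : Submodule R M) := by
      apply mem_of_isSMulRegular_quotient_of_smul_mem h.isSMulRegular_head
      rwa [smul_sub, ← hps, smul_smul, ← sq, add_sub_cancel_left]
    rw [← add_sub_cancel (x • w) m]
    exact add_mem (Submodule.mem_sup_left (Submodule.smul_mem_pointwise_smul _ _ _ trivial))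
      (Submodule.mem_sup_right hmw)
  · intro m hm
    refine Submodule.mem_colonBy.mpr fun r hr ↦ ?_
    apply Submodule.smul_mono_left (Ideal.ofList_cons_mul_self_le x xs)
    rw [Submodule.mul_smul]
    exact Submodule.smul_mem_smul hr hm

/-- Every `M`-regular sequence `x₁, …, xₙ` is selflinked: the ideal `a = (x₁, …, xₙ)`
is linked to itself by `I = (x₁², x₂, …, xₙ)` over `M`; in particular `IM :_M a = aM`. -/
theorem regular_sequence_selflinked {R M : Type*} [CommRing R] [AddCommGroup M] [Module R M]
    [IsNoetherianRing R] [Module.Finite R M]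
    (x : R) (xs : List R) (hreg : RingTheory.Sequence.IsRegular M (x :: xs)) :
    Ideal.LinkedBy R M (Ideal.ofList (x :: xs)) (Ideal.ofList (x :: xs))
      (Ideal.ofList (x ^ 2 :: xs)) ∧
    ((Ideal.ofList (x ^ 2 :: xs)) • ⊤ : Submodule R M).colonBy (Ideal.ofList (x :: xs)) =
      (Ideal.ofList (x :: xs)) • (⊤ : Submodule R M) := by
  have hcolon := hreg.toIsWeaklyRegular.colonBy_eq
  have hle := Ideal.ofList_sq_cons_le x xs
  have htop := hreg.top_ne_smul
  refine ⟨⟨le_inf hle hle, ⟨_, rfl, hreg.toIsWeaklyRegular.sq_head, fun h ↦ htop ?_⟩,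
    htop.symm, htop.symm, hcolon, hcolon⟩, hcolon⟩
  exact (top_le_iff.mp (h.le.trans (Submodule.smul_mono_left hle))).symm
end

section
/- Let M and N be finitely generated R-modules and a, b ideals with aM ≠ M, bM ≠ M, aN ≠ N, bN ≠ N. Then a ∼_{(0; M ⊕ N)} b (i.e., 0 :_{M⊕N} a = b(M⊕N) and 0 :_{M⊕N} b = a(M⊕N)) if and only if a ∼_{(0;M)} b and a ∼_{(0;N)} b. -/
open RingTheory.Sequence

namespace Submodule

variable {R M N : Type*} [CommRing R] [AddCommGroup M] [Module R M] [AddCommGroup N] [Module R N]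

theorem mem_colonBy_s1 {p : Submodule R M} {a : Ideal R} {m : M} :
    m ∈ p.colonBy a ↔ ∀ r ∈ a, r • m ∈ p := by
  simp [colonBy, mem_iInf]

theorem colonBy_prod (p : Submodule R M) (q : Submodule R N) (a : Ideal R) :
    (p.prod q).colonBy a = (p.colonBy a).prod (q.colonBy a) := by
  ext ⟨m, n⟩
  simp only [mem_colonBy_s1, mem_prod, Prod.smul_fst, Prod.smul_snd, ← forall_and]

theorem ideal_smul_prod (a : Ideal R) (p : Submodule R M) (q : Submodule R N) :
    a • p.prod q = (a • p).prod (a • q) := by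
  simp only [LinearMap.prod_eq_sup_map, smul_sup, map_smul'']

theorem prod_eq_prod_iff {p p' : Submodule R M} {q q' : Submodule R N} :
    p.prod q = p'.prod q' ↔ p = p' ∧ q = q' := by
  refine ⟨fun h => ⟨?_, ?_⟩, fun ⟨hp, hq⟩ => hp ▸ hq ▸ rfl⟩
  · simpa using congrArg (comap (LinearMap.inl R M N)) h
  · simpa using congrArg (comap (LinearMap.inr R M N)) h

theorem colonBy_bot_prod_eq_smul_top_iff (a b : Ideal R) :
    (⊥ : Submodule R (M × N)).colonBy a = b • ⊤ ↔
      (⊥ : Submodule R M).colonBy a = b • ⊤ ∧ (⊥ : Submodule R N).colonBy a = b • ⊤ := by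
  rw [← prod_bot, ← prod_top, colonBy_prod, ideal_smul_prod, prod_eq_prod_iff]

end Submodule

/-- `a ∼_{(0; M ⊕ N)} b` iff `a ∼_{(0;M)} b` and `a ∼_{(0;N)} b`. -/
theorem linked_prod_iff {R M N : Type*} [CommRing R] [IsNoetherianRing R]
    [AddCommGroup M] [Module R M] [Module.Finite R M]
    [AddCommGroup N] [Module R N] [Module.Finite R N]
    (a b : Ideal R)
    (haM : a • (⊤ : Submodule R M) ≠ ⊤) (hbM : b • (⊤ : Submodule R M) ≠ ⊤)
    (haN : a • (⊤ : Submodule R N) ≠ ⊤) (hbN : b • (⊤ : Submodule R N) ≠ ⊤) :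
    ((⊥ : Submodule R (M × N)).colonBy a = b • ⊤ ∧
        (⊥ : Submodule R (M × N)).colonBy b = a • ⊤) ↔
      (((⊥ : Submodule R M).colonBy a = b • ⊤ ∧ (⊥ : Submodule R M).colonBy b = a • ⊤) ∧
        ((⊥ : Submodule R N).colonBy a = b • ⊤ ∧ (⊥ : Submodule R N).colonBy b = a • ⊤)) := by
  rw [Submodule.colonBy_bot_prod_eq_smul_top_iff, Submodule.colonBy_bot_prod_eq_smul_top_iff]
  exact and_and_and_comm
end

section
/- If a and b are linked by I over M, then M/aM embeds into a finite direct sum of copies of M/IM. -/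
open RingTheory.Sequence

/-- The colon submodule by the ideal spanned by a family `g` is the kernel of the map
`m ↦ (g i • m)ᵢ` into copies of `M ⧸ N`. -/
theorem Submodule.ker_pi_smul_mkQ_eq_colonBy {R M ι : Type*} [CommRing R] [AddCommGroup M]
    [Module R M] (N : Submodule R M) (g : ι → R) :
    LinearMap.ker (LinearMap.pi fun i => N.mkQ ∘ₗ LinearMap.lsmul R M (g i)) =
      N.colonBy (Ideal.span (Set.range g)) := by
  ext m
  simp only [Submodule.colonBy, LinearMap.mem_ker, Submodule.mem_iInf, Submodule.mem_comap,
    LinearMap.lsmul_apply, funext_iff, LinearMap.pi_apply, LinearMap.comp_apply,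
    Submodule.mkQ_apply, Pi.zero_apply, Submodule.Quotient.mk_eq_zero]
  constructor
  · intro hm r hr
    have hle : Ideal.span (Set.range g) ≤ N.comap (LinearMap.toSpanSingleton R M m) :=
      Submodule.span_le.2 (by rintro _ ⟨i, rfl⟩; exact hm i)
    exact hle hr
  · exact fun hm i => hm _ (Ideal.subset_span ⟨i, rfl⟩)

/-- If `a` and `b` are linked by `I` over `M`, then `M/aM` embeds into a
finite direct sum of copies of `M/IM`. -/
theorem quot_embeds_of_linked {R M : Type*} [CommRing R] [IsNoetherianRing R]
    [AddCommGroup M] [Module R M] [Module.Finite R M]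
    (a b I : Ideal R) (h : Ideal.LinkedBy R M a b I) :
    ∃ (n : ℕ) (f : (M ⧸ (a • ⊤ : Submodule R M)) →ₗ[R]
      (Fin n → M ⧸ (I • ⊤ : Submodule R M))), Function.Injective f := by
  obtain ⟨-, -, -, -, -, hb⟩ := h
  obtain ⟨n, g, rfl⟩ := Submodule.fg_iff_exists_fin_generating_family.1
    (IsNoetherian.noetherian b)
  have hker := ((I • ⊤ : Submodule R M).ker_pi_smul_mkQ_eq_colonBy g).trans hb
  exact ⟨n, Submodule.liftQ _ _ hker.ge,
    LinearMap.ker_eq_bot.1 (Submodule.ker_liftQ_eq_bot _ _ _ hker.le)⟩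
end

section
/- Suppose a and b are geometrically linked by I over M, i.e., a ∼_{(I;M)} b and aM ∩ bM = IM. Then Ass(M/aM) ∩ Ass(M/bM) = ∅. -/
open RingTheory.Sequence

/-- Every associated prime of `M ⧸ bM` contains `b`. -/
theorem IsAssociatedPrime.le_of_quotient_smul_top {R M : Type*} [CommRing R] [AddCommGroup M]
    [Module R M] {b p : Ideal R}
    (hp : IsAssociatedPrime p (M ⧸ (b • ⊤ : Submodule R M))) : b ≤ p := by
  refine le_trans (fun r hr => ?_) hp.annihilator_le
  rw [Submodule.mem_annihilator]
  rintro x -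
  obtain ⟨y, rfl⟩ := Submodule.Quotient.mk_surjective _ x
  rw [← Submodule.Quotient.mk_smul, Submodule.Quotient.mk_eq_zero]
  exact Submodule.smul_mem_smul hr trivial

/-- If `a` and `b` are geometrically linked by `I` over `M` (i.e. linked with
`aM ∩ bM = IM`), then `Ass(M/aM) ∩ Ass(M/bM) = ∅`. -/
theorem ass_disjoint_of_geometrically_linked {R M : Type*} [CommRing R] [IsNoetherianRing R]
    [AddCommGroup M] [Module R M] [Module.Finite R M]
    (a b I : Ideal R) (h : Ideal.LinkedBy R M a b I)
    (hgeo : (a • ⊤ : Submodule R M) ⊓ (b • ⊤ : Submodule R M) = I • ⊤) :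
    associatedPrimes R (M ⧸ (a • ⊤ : Submodule R M)) ∩
      associatedPrimes R (M ⧸ (b • ⊤ : Submodule R M)) = ∅ := by
  rw [Set.eq_empty_iff_forall_notMem]
  rintro p ⟨hpa, hpb⟩
  obtain ⟨-, -, -, -, -, hcolon⟩ := h
  have hbp : b ≤ p := IsAssociatedPrime.le_of_quotient_smul_top hpb
  obtain ⟨hp, x, rfl⟩ := isAssociatedPrime_iff.mp hpa
  obtain ⟨y, rfl⟩ := Submodule.Quotient.mk_surjective _ x
  have hy : y ∈ (a • ⊤ : Submodule R M) := by
    rw [← hcolon]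
    simp only [Submodule.colonBy, Submodule.mem_iInf, Submodule.mem_comap, LinearMap.lsmul_apply]
    intro r hr
    rw [← hgeo]
    refine ⟨?_, Submodule.smul_mem_smul hr trivial⟩
    simpa [Submodule.mem_colon_singleton, ← Submodule.Quotient.mk_smul,
      Submodule.Quotient.mk_eq_zero] using hbp hr
  refine hp.ne_top ?_
  rw [(Submodule.Quotient.mk_eq_zero _).mpr hy]
  simp
end

section
/- Let S be a Gorenstein local ring and c an ideal of S of pure height 0, i.e., every associated prime p of S/c satisfies ht p = 0. Then 0 :_S (0 :_S c) = c. -/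
universe u

open CategoryTheory in
/-- A module has finite injective dimension if there is `n` such that
`Ext^i(N, M) = 0` for all modules `N` and all `i > n`. -/
def Module.HasFiniteInjDim (R M : Type u) [CommRing R] [AddCommGroup M] [Module R M] : Prop :=
  ∃ n : ℕ, ∀ (N : ModuleCat.{u} R) (i : ℕ), n < i →
    Subsingleton (((Ext R (ModuleCat.{u} R) i).obj (Opposite.op N)).obj (ModuleCat.of R M))

/-- A Noetherian local ring is Gorenstein if it has finite injective dimension
as a module over itself. -/
def IsGorensteinLocalRing (S : Type u) [CommRing S] [IsLocalRing S] [IsNoetherianRing S] :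
    Prop :=
  Module.HasFiniteInjDim S S

section

open CategoryTheory Abelian

/-- Vanishing of `Ext^(n + 1)`, computed from projective resolutions, bounds the injective
dimension by `n`. -/
theorem ModuleCat.hasInjectiveDimensionLE_of_subsingleton_derived_ext {R : Type u} [CommRing R] (M : ModuleCat.{u} R) (n : ℕ)
    (h : ∀ N : ModuleCat.{u} R,
      Subsingleton (((_root_.Ext R (ModuleCat.{u} R) (n + 1)).obj (Opposite.op N)).obj M)) :
    HasInjectiveDimensionLE M n := by
  refine hasInjectiveDimensionLT_of_enoughProjectives M (n + 1) fun N ↦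
    subsingleton_of_forall_eq 0 fun α ↦ ?_
  let P := ProjectiveResolution.of N
  obtain ⟨f, hf, rfl⟩ := P.extMk_surjective α (n + 2) rfl
  rw [P.extMk_eq_zero_iff f (n + 2) rfl hf n rfl]
  have hz : Limits.IsZero ((P.complex.linearYonedaObj R M).homology (n + 1)) := by
    have := h N
    exact (ModuleCat.isZero_of_subsingleton _).of_iso (P.isoExt (n + 1) M).symm
  rw [← HomologicalComplex.exactAt_iff_isZero_homology,
    HomologicalComplex.exactAt_iff' _ n (n + 1) (n + 2) (by simp) (by simp),
    ShortComplex.moduleCat_exact_iff] at hz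
  exact hz f hf

theorem Module.HasFiniteInjDim.exists_hasInjectiveDimensionLE {R M : Type u} [CommRing R]
    [AddCommGroup M] [Module R M] (h : Module.HasFiniteInjDim R M) :
    ∃ n, HasInjectiveDimensionLE (ModuleCat.of R M) n :=
  h.imp fun n hn ↦ ModuleCat.hasInjectiveDimensionLE_of_subsingleton_derived_ext _ n fun N ↦ hn N _ n.lt_succ_self

/-- Baer's criterion in higher degrees: the injective dimension is bounded by `n` as soon as
`Ext^(n + 1)` vanishes on cyclic modules. -/
theorem ModuleCat.hasInjectiveDimensionLE_of_subsingleton_ext_quotient {R : Type u} [CommRing R] (n : ℕ) (X : ModuleCat.{u} R)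
    (h : ∀ I : Ideal R, Subsingleton (Ext (ModuleCat.of R (R ⧸ I)) X (n + 1))) :
    HasInjectiveDimensionLE X n := by
  induction n generalizing X with
  | zero =>
    rw [HasInjectiveDimensionLE, zero_add, ← injective_iff_hasInjectiveDimensionLT_one,
      ← Module.injective_iff_injective_object, ← Module.Baer.iff_injective]
    intro I g
    let T := ModuleCat.shortComplexOfCompEqZero I.subtype I.mkQ
      (LinearMap.exact_subtype_mkQ I).linearMap_comp_eq_zero
    have hT : T.ShortExact := ModuleCat.shortComplex_shortExact T (LinearMap.exact_subtype_mkQ I)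
      I.injective_subtype I.mkQ_surjective
    obtain ⟨φ, hφ⟩ := Ext.contravariant_sequence_exact₁ hT X (Ext.mk₀ (ModuleCat.ofHom g))
      (add_comm 1 0) ((h I).elim _ _)
    obtain ⟨φ, rfl⟩ := Ext.homEquiv₀.symm.surjective φ
    have key : T.f ≫ φ = ModuleCat.ofHom g := Ext.homEquiv₀.symm.injective (by simpa using hφ)
    exact ⟨φ.hom, fun x hx ↦ congr($(key).hom ⟨x, hx⟩)⟩
  | succ n ih =>
    obtain ⟨J, hJ, f, _⟩ := EnoughInjectives.presentation X
    let T := ShortComplex.mk f (Limits.cokernel.π f) (Limits.cokernel.condition f)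
    have hT : T.ShortExact := { exact := ShortComplex.exact_cokernel f }
    refine (hT.hasInjectiveDimensionLT_X₃_iff n hJ).1 (ih _ fun I ↦
      subsingleton_of_forall_eq 0 fun α ↦ ?_)
    obtain ⟨β, rfl⟩ := Ext.covariant_sequence_exact₃ _ hT α rfl ((h I).elim _ _)
    rw [Ext.eq_zero_of_injective β, Ext.zero_comp]

theorem Ring.KrullDimLE.mem_associatedPrimes_self {A : Type*} [CommRing A] [IsNoetherianRing A]
    [Ring.KrullDimLE 0 A] (p : Ideal A) [p.IsPrime] : p ∈ associatedPrimes A A := by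
  refine Module.associatedPrimes.minimalPrimes_annihilator_subset_associatedPrimes A A ?_
  rw [Module.annihilator_eq_bot.2 inferInstance]
  exact Ideal.mem_minimalPrimes_of_krullDimLE_zero p

/-- Over a Noetherian ring of dimension zero every prime is associated, so `A ⧸ p` embeds into `A`
and a finite positive bound on the self-injective dimension can be lowered. -/
theorem Ring.KrullDimLE.hasInjectiveDimensionLE_self_of_succ {A : Type u} [CommRing A]
    [IsNoetherianRing A] [Ring.KrullDimLE 0 A]
    (n : ℕ) (h : HasInjectiveDimensionLE (ModuleCat.of A A) (n + 1)) :
    HasInjectiveDimensionLE (ModuleCat.of A A) n := by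
  refine ModuleCat.hasInjectiveDimensionLE_of_subsingleton_ext_quotient n _ fun I ↦ ?_
  refine IsNoetherianRing.induction_on_isQuotientEquivQuotientPrime A
    (M := A ⧸ I) inferInstance
    (motive := fun N _ _ _ ↦ Subsingleton (Ext (ModuleCat.of A N) (ModuleCat.of A A) (n + 1)))
    ?_ ?_ ?_
  · intro N _ _ _ _
    refine subsingleton_of_forall_eq 0 fun α ↦ ?_
    rw [← Ext.mk₀_id_comp α, (ModuleCat.isZero_of_subsingleton (ModuleCat.of A N)).eq_zero_of_src
      (𝟙 _), Ext.mk₀_zero, Ext.zero_comp]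
  · intro N _ _ _ p e
    have hp : p.asIdeal ∈ associatedPrimes A A := Ring.KrullDimLE.mem_associatedPrimes_self _
    obtain ⟨-, f, hf⟩ := (isAssociatedPrime_iff_exists_injective_linearMap _ _).1 hp
    let g : N →ₗ[A] A := f ∘ₗ e.toLinearMap
    let T := ModuleCat.shortComplexOfCompEqZero g g.range.mkQ
      g.exact_map_mkQ_range.linearMap_comp_eq_zero
    have hT : T.ShortExact := ModuleCat.shortComplex_shortExact T g.exact_map_mkQ_range
      (hf.comp e.injective) g.range.mkQ_surjective
    refine subsingleton_of_forall_eq 0 fun α ↦ ?_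
    obtain ⟨β, rfl⟩ := Ext.contravariant_sequence_exact₁ hT _ α (add_comm 1 (n + 1))
      (Ext.eq_zero_of_hasInjectiveDimensionLT _ (n + 2) le_rfl)
    have : Projective T.X₂ := inferInstanceAs (Projective (ModuleCat.of A A))
    rw [Ext.eq_zero_of_projective β, Ext.comp_zero]
  · intro N₁ _ _ _ N₂ _ _ _ N₃ _ _ _ f g hf hg hfg h₁ h₃
    let T := ModuleCat.shortComplexOfCompEqZero f g hfg.linearMap_comp_eq_zero
    have hT : T.ShortExact := ModuleCat.shortComplex_shortExact T hfg hf hg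
    refine subsingleton_of_forall_eq 0 fun α ↦ ?_
    obtain ⟨β, rfl⟩ := Ext.contravariant_sequence_exact₂ hT _ α (h₁.elim _ _)
    rw [h₃.elim β 0, Ext.comp_zero]

theorem Ring.KrullDimLE.baer_self_of_hasInjectiveDimensionLE {A : Type u} [CommRing A]
    [IsNoetherianRing A] [Ring.KrullDimLE 0 A] (n : ℕ)
    (h : HasInjectiveDimensionLE (ModuleCat.of A A) n) : Module.Baer A A := by
  induction n with
  | zero =>
    rwa [HasInjectiveDimensionLE, zero_add, ← injective_iff_hasInjectiveDimensionLT_one,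
      ← Module.injective_iff_injective_object, ← Module.Baer.iff_injective] at h
  | succ n ih => exact ih (Ring.KrullDimLE.hasInjectiveDimensionLE_self_of_succ n h)

/-- A self-injective local ring with nonzero socle is a cogenerator: ideals are separated from
elements outside them by multiplication maps. -/
theorem Module.Baer.exists_mul_eq_zero_and_mul_ne_zero {A : Type*} [CommRing A] [IsLocalRing A]
    [IsNoetherianRing A] (hA : Module.Baer A A)
    (hm : IsLocalRing.maximalIdeal A ∈ associatedPrimes A A)
    (I : Ideal A) {x : A} (hx : x ∉ I) :
    ∃ y : A, (∀ a ∈ I, y * a = 0) ∧ y * x ≠ 0 := by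
  obtain ⟨-, z, hz⟩ := isAssociatedPrime_iff.1 hm
  have hmz (a : A) : a ∈ IsLocalRing.maximalIdeal A ↔ a * z = 0 := by
    rw [hz, Submodule.mem_colon_singleton, Submodule.mem_bot, smul_eq_mul]
  let φ : A →ₗ[A] A ⧸ I := LinearMap.toSpanSingleton A _ (I.mkQ x)
  have hker : φ.ker ≤ (LinearMap.toSpanSingleton A A z).ker := by
    intro a ha
    rw [LinearMap.mem_ker, LinearMap.toSpanSingleton_apply, smul_eq_mul, ← hmz,
      IsLocalRing.mem_maximalIdeal, mem_nonunits_iff]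
    intro hu
    have hax : a * x ∈ I := by
      rwa [LinearMap.mem_ker, LinearMap.toSpanSingleton_apply, ← map_smul, smul_eq_mul,
        Submodule.mkQ_apply, Submodule.Quotient.mk_eq_zero] at ha
    exact hx ((Ideal.unit_mul_mem_iff_mem I hu).1 hax)
  obtain ⟨h, hh⟩ := hA.extension_property (φ.ker.liftQ φ le_rfl)
    (LinearMap.ker_eq_bot.1 (Submodule.ker_liftQ_eq_bot' _ _ rfl)) (φ.ker.liftQ _ hker)
  have hval (a : A) : h (I.mkQ 1) * a = h (I.mkQ a) := by
    rw [mul_comm, ← smul_eq_mul, ← map_smul, ← map_smul, smul_eq_mul, mul_one]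
  refine ⟨h (I.mkQ 1), fun a ha ↦ ?_, ?_⟩
  · rw [hval, Submodule.mkQ_apply, (Submodule.Quotient.mk_eq_zero I).2 ha, map_zero]
  · have hxz : h (I.mkQ x) = z := by
      have := congr($hh (φ.ker.mkQ 1))
      rwa [LinearMap.comp_apply, Submodule.mkQ_apply, Submodule.liftQ_apply, Submodule.liftQ_apply,
        LinearMap.toSpanSingleton_apply_one, LinearMap.toSpanSingleton_apply_one] at this
    rw [hval, hxz]
    rintro rfl
    exact (IsLocalRing.maximalIdeal A).ne_top_iff_one.1 Ideal.IsPrime.ne_top' ((hmz 1).2 (by simp))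

theorem Submodule.mem_bot_colonBy {R : Type*} [CommRing R] {a : Ideal R} {x : R} :
    x ∈ (⊥ : Ideal R).colonBy a ↔ ∀ r ∈ a, r * x = 0 := by
  simp [Submodule.colonBy]

/-- Finite injective dimension of the ring localizes, and becomes self-injectivity at a minimal
prime. -/
theorem Module.HasFiniteInjDim.baer_localization_atPrime {S : Type u} [CommRing S]
    [IsNoetherianRing S] (hS : Module.HasFiniteInjDim S S) {p : Ideal S} [p.IsPrime]
    [Ring.KrullDimLE 0 (Localization.AtPrime p)] :
    Module.Baer (Localization.AtPrime p) (Localization.AtPrime p) := by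
  obtain ⟨n, hn⟩ := hS.exists_hasInjectiveDimensionLE
  have : IsNoetherianRing (Localization.AtPrime p) :=
    IsLocalization.isNoetherianRing p.primeCompl _ inferInstance
  refine Ring.KrullDimLE.baer_self_of_hasInjectiveDimensionLE n ?_
  have h := (ModuleCat.of S S).localizedModule_hasInjectiveDimensionLE n p.primeCompl
  have : IsLocalizedModule p.primeCompl (M := S)
      ((ModuleCat.of S S).localizedModuleMkLinearMap p.primeCompl) :=
    ModuleCat.localizedModule_isLocalizedModule _ _
  let e := LinearEquiv.extendScalarsOfIsLocalization p.primeCompl (Localization.AtPrime p)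
    (IsLocalizedModule.linearEquiv p.primeCompl
      ((ModuleCat.of S S).localizedModuleMkLinearMap p.primeCompl)
      (Algebra.linearMap S (Localization.AtPrime p)))
  exact (ModuleCat.hasInjectiveDimensionLE_iff_of_linearEquiv
    (N := ModuleCat.of (Localization.AtPrime p) (Localization.AtPrime p)) e n).1 h

end

/-- In a Gorenstein local ring `S`, if every associated prime of `S/c` has height `0`,
then `0 :_S (0 :_S c) = c`. -/
theorem double_annihilator_eq {S : Type u} [CommRing S] [IsLocalRing S] [IsNoetherianRing S]
    (hS : IsGorensteinLocalRing S) (c : Ideal S)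
    (hpure : ∀ p, (hp : p ∈ associatedPrimes S (S ⧸ c)) →
      Order.height (⟨p, hp.1⟩ : PrimeSpectrum S) = 0) :
    (⊥ : Ideal S).colonBy ((⊥ : Ideal S).colonBy c) = c := by
  refine le_antisymm (fun x hx ↦ ?_) fun x hx ↦ Submodule.mem_bot_colonBy.2 fun r hr ↦ by
    rw [mul_comm, Submodule.mem_bot_colonBy.1 hr x hx]
  by_contra hxc
  obtain ⟨p, hp, hle⟩ := exists_le_isAssociatedPrime_of_isNoetherianRing S (c.mkQ x)
    (by simpa [Ideal.Quotient.eq_zero_iff_mem] using hxc)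
  have := hp.isPrime
  have hmin : p ∈ minimalPrimes S := by
    rw [← PrimeSpectrum.isMin_iff (x := ⟨p, hp.isPrime⟩), ← Order.height_eq_zero]
    exact hpure p hp
  let A := Localization.AtPrime p
  have : Ring.KrullDimLE 0 A := .of_isLocalization p hmin A
  have : IsNoetherianRing A := IsLocalization.isNoetherianRing p.primeCompl A inferInstance
  have hxA : algebraMap S A x ∉ c.map (algebraMap S A) := by
    rw [IsLocalization.algebraMap_mem_map_algebraMap_iff p.primeCompl]
    rintro ⟨s, hs, hsx⟩
    refine hs (hle ?_)
    rw [Submodule.mem_colon_singleton, Submodule.mem_bot, ← map_smul]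
    exact (Submodule.Quotient.mk_eq_zero c).2 hsx
  obtain ⟨y, hyc, hyx⟩ := (Module.HasFiniteInjDim.baer_localization_atPrime
    hS (p := p)).exists_mul_eq_zero_and_mul_ne_zero
    (Ring.KrullDimLE.mem_associatedPrimes_self _) _ hxA
  obtain ⟨⟨a, s⟩, hs⟩ := IsLocalization.surj p.primeCompl y
  obtain ⟨t, ht⟩ := Module.Finite.exists_smul_of_comp_eq_of_isLocalizedModule p.primeCompl
    (Algebra.linearMap S A) (LinearMap.lsmul S S a ∘ₗ c.subtype) 0 (by
      ext r
      have hr := hyc _ (Ideal.mem_map_of_mem (algebraMap S A) r.2)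
      simp only [LinearMap.comp_apply, LinearMap.lsmul_apply, Submodule.subtype_apply, smul_eq_mul,
        Algebra.linearMap_apply, map_mul, LinearMap.zero_apply, map_zero]
      rw [← hs, mul_right_comm, hr, zero_mul])
  have hta : t.1 * a ∈ (⊥ : Ideal S).colonBy c := Submodule.mem_bot_colonBy.2 fun r hr ↦ by
    have := congr($ht ⟨r, hr⟩)
    simp only [LinearMap.smul_apply, LinearMap.comp_apply, LinearMap.lsmul_apply,
      Submodule.subtype_apply, smul_eq_mul, LinearMap.zero_apply, smul_zero,
      Submonoid.smul_def] at this
    rw [mul_comm, mul_assoc, this]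
  have hzero := congr(algebraMap S A $(Submodule.mem_bot_colonBy.1 hx _ hta))
  rw [map_mul, map_mul, map_zero, mul_assoc,
    (IsLocalization.map_units A t).mul_right_eq_zero, ← hs, mul_right_comm,
    (IsLocalization.map_units A s).mul_left_eq_zero] at hzero
  exact hyx hzero
end

section
/- Let (R, m) be a Cohen-Macaulay local ring with canonical module ω_R, and let I ⊆ a ∩ b be an ideal generated by an R-regular sequence with a ≠ I, b ≠ I, and I :_R a = b (so a and b are linked by I over R). Then ω_R/a·ω_R is Cohen-Macaulay if and only if ω_R/a·ω_R is unmixed and R/b is Cohen-Macaulay. -/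
universe u

open RingTheory.Sequence IsLocalRing

/-- The `M`-grade of an ideal `c`: the length of a maximal `M`-regular sequence
with entries in `c`. -/
noncomputable def Module.grade (R : Type*) [CommRing R] (c : Ideal R)
    (M : Type*) [AddCommGroup M] [Module R M] : ℕ :=
  sSup {n | ∃ rs : List R, rs.length = n ∧ (∀ r ∈ rs, r ∈ c) ∧
    RingTheory.Sequence.IsRegular M rs}
/-- The dimension of a module: the Krull dimension of `R / ann M`. -/
noncomputable def Module.dim (R : Type*) [CommRing R]
    (M : Type*) [AddCommGroup M] [Module R M] : WithBot (WithTop ℕ) :=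
  ringKrullDim (R ⧸ Module.annihilator R M)

/-- A module over a local ring is Cohen–Macaulay if its depth (the grade of the
maximal ideal) equals its dimension. -/
def Module.IsCM (R : Type*) [CommRing R] [IsLocalRing R]
    (M : Type*) [AddCommGroup M] [Module R M] : Prop :=
  (Module.grade R (IsLocalRing.maximalIdeal R) M : WithBot (WithTop ℕ)) = Module.dim R M
/-- `N` is unmixed: `dim R/p = dim N` for every associated prime `p` of `N`. -/
def Module.IsUnmixed (R : Type*) [CommRing R] (N : Type*) [AddCommGroup N] [Module R N] :
    Prop :=
  ∀ p ∈ associatedPrimes R N, ringKrullDim (R ⧸ p) = Module.dim R N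

/-- `ω` is a canonical module of the Cohen–Macaulay local ring `R`: finitely generated,
of finite injective dimension, maximal Cohen–Macaulay, and the natural map
`R → End(ω)` is bijective. -/
def IsCanonicalModule (R ω : Type u) [CommRing R] [IsLocalRing R] [IsNoetherianRing R]
    [AddCommGroup ω] [Module R ω] : Prop :=
  Module.Finite R ω ∧ Module.HasFiniteInjDim R ω ∧
    (Module.grade R (maximalIdeal R) ω : WithBot (WithTop ℕ)) = ringKrullDim R ∧
    Function.Bijective (LinearMap.lsmul R ω)

namespace CanonicalLinkage

open CategoryTheory Pointwise

section ExtVanishing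

variable {R : Type u} [CommRing R]

/-- `Ext^i(N, M) = 0`, for unbundled modules. -/
def ExtVanish (R : Type u) [CommRing R] (N M : Type u) [AddCommGroup N] [Module R N]
    [AddCommGroup M] [Module R M] (i : ℕ) : Prop :=
  Subsingleton (Abelian.Ext (ModuleCat.of R N) (ModuleCat.of R M) i)

variable {A B C M : Type u} [AddCommGroup A] [Module R A] [AddCommGroup B] [Module R B]
  [AddCommGroup C] [Module R C] [AddCommGroup M] [Module R M]

lemma shortExact_of_linearMap {f : A →ₗ[R] B} {g : B →ₗ[R] C} (hf : Function.Injective f)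
    (hg : Function.Surjective g) (hfg : Function.Exact f g) :
    (ModuleCat.shortComplexOfCompEqZero f g hfg.linearMap_comp_eq_zero).ShortExact where
  exact := ModuleCat.shortComplex_exact _ hfg
  mono_f := (ModuleCat.mono_iff_injective _).mpr hf
  epi_g := (ModuleCat.epi_iff_surjective _).mpr hg

section

variable {f : A →ₗ[R] B} {g : B →ₗ[R] C}

lemma ExtVanish.left_of_exact (hf : Function.Injective f) (hg : Function.Surjective g)
    (hfg : Function.Exact f g) {i : ℕ} (hB : ExtVanish R B M i)
    (hC : ExtVanish R C M (i + 1)) : ExtVanish R A M i := by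
  unfold ExtVanish at *
  refine subsingleton_of_forall_eq 0 fun x ↦ ?_
  obtain ⟨y, rfl⟩ := Abelian.Ext.contravariant_sequence_exact₁
    (shortExact_of_linearMap hf hg hfg) _ x (add_comm 1 i) (hC.elim _ _)
  rw [hB.elim y 0, Abelian.Ext.comp_zero]

lemma ExtVanish.middle_of_exact (hf : Function.Injective f) (hg : Function.Surjective g)
    (hfg : Function.Exact f g) {i : ℕ} (hA : ExtVanish R A M i)
    (hC : ExtVanish R C M i) : ExtVanish R B M i := by
  unfold ExtVanish at *
  refine subsingleton_of_forall_eq 0 fun x ↦ ?_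
  obtain ⟨y, rfl⟩ := Abelian.Ext.contravariant_sequence_exact₂
    (shortExact_of_linearMap hf hg hfg) _ x (hA.elim _ _)
  rw [hC.elim y 0, Abelian.Ext.comp_zero]

lemma ExtVanish.right_of_exact (hf : Function.Injective f) (hg : Function.Surjective g)
    (hfg : Function.Exact f g) {i : ℕ} (hA : ExtVanish R A M i)
    (hB : ExtVanish R B M (i + 1)) : ExtVanish R C M (i + 1) := by
  unfold ExtVanish at *
  refine subsingleton_of_forall_eq 0 fun x ↦ ?_
  obtain ⟨y, rfl⟩ := Abelian.Ext.contravariant_sequence_exact₃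
    (shortExact_of_linearMap hf hg hfg) _ x (hB.elim _ _) (add_comm 1 i)
  rw [hA.elim y 0, Abelian.Ext.comp_zero]

lemma ExtVanish.left_of_exact_covariant (hf : Function.Injective f)
    (hg : Function.Surjective g) (hfg : Function.Exact f g) {i : ℕ} (hB : ExtVanish R M B (i + 1))
    (hC : ExtVanish R M C i) : ExtVanish R M A (i + 1) := by
  unfold ExtVanish at *
  refine subsingleton_of_forall_eq 0 fun x ↦ ?_
  obtain ⟨y, rfl⟩ := Abelian.Ext.covariant_sequence_exact₁ _
    (shortExact_of_linearMap hf hg hfg) x (hB.elim _ _) rfl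
  rw [hC.elim y 0, Abelian.Ext.zero_comp]

lemma ExtVanish.right_of_exact_covariant (hf : Function.Injective f)
    (hg : Function.Surjective g) (hfg : Function.Exact f g) {i : ℕ} (hB : ExtVanish R M B i)
    (hA : ExtVanish R M A (i + 1)) : ExtVanish R M C i := by
  unfold ExtVanish at *
  refine subsingleton_of_forall_eq 0 fun x ↦ ?_
  obtain ⟨y, rfl⟩ := Abelian.Ext.covariant_sequence_exact₃ _
    (shortExact_of_linearMap hf hg hfg) x rfl (hA.elim _ _)
  rw [hB.elim y 0, Abelian.Ext.zero_comp]

end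

lemma ExtVanish.of_subsingleton_left [Subsingleton A] (i : ℕ) : ExtVanish R A M i := by
  have h : 𝟙 (ModuleCat.of R A) = 0 := by
    ext x
    exact Subsingleton.elim (α := A) _ _
  refine subsingleton_of_forall_eq 0 fun x ↦ ?_
  rw [← Abelian.Ext.mk₀_id_comp x, h, Abelian.Ext.mk₀_zero, Abelian.Ext.zero_comp]

lemma ExtVanish.of_linearEquiv (e : A ≃ₗ[R] B) {i : ℕ} (h : ExtVanish R A M i) :
    ExtVanish R B M i := by
  unfold ExtVanish at *
  refine subsingleton_of_forall_eq 0 fun x ↦ ?_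
  have h1 := Abelian.Ext.mk₀_comp_mk₀_assoc e.toModuleIso.inv e.toModuleIso.hom x
  rw [Iso.inv_hom_id, Abelian.Ext.mk₀_id_comp] at h1
  rw [← h1, h.elim (Abelian.Ext.comp _ x _) 0, Abelian.Ext.comp_zero]

lemma extVanish_zero_iff : ExtVanish R A M 0 ↔ Subsingleton (A →ₗ[R] M) :=
  (Abelian.Ext.addEquiv₀.trans ModuleCat.homAddEquiv).subsingleton_congr

lemma ExtVanish.of_projective [Module.Projective R A] (i : ℕ) : ExtVanish R A M (i + 1) := by
  have : Projective (ModuleCat.of R A) := inferInstance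
  exact subsingleton_of_forall_eq 0 fun x ↦ Abelian.Ext.eq_zero_of_projective x

lemma mk₀_lsmul_comp_ext {N : ModuleCat.{u} R} {i : ℕ} (x : R)
    (z : Abelian.Ext (ModuleCat.of R A) N i) :
    (Abelian.Ext.mk₀ (ModuleCat.ofHom (LinearMap.lsmul R A x))).comp z (zero_add i) = x • z := by
  have : ModuleCat.ofHom (LinearMap.lsmul R A x) = x • 𝟙 (ModuleCat.of R A) := rfl
  rw [this, Abelian.Ext.mk₀_smul, Abelian.Ext.smul_comp, Abelian.Ext.mk₀_id_comp]

/-- Nakayama for `Ext`: if `x` in the maximal ideal is regular on `N`, then vanishing of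
`Ext^(i+1)(N/xN, M)` forces vanishing of `Ext^i(N, M)`. -/
lemma ExtVanish.of_injective_lsmul [IsLocalRing R] [IsNoetherianRing R] [Module.Finite R A]
    [Module.Finite R M] {x : R} (hx : x ∈ maximalIdeal R) (hreg : IsSMulRegular A x)
    {g : A →ₗ[R] C} (hg : Function.Surjective g)
    (hfg : Function.Exact (LinearMap.lsmul R A x) g) {i : ℕ}
    (h : ExtVanish R C M (i + 1)) : ExtVanish R A M i := by
  unfold ExtVanish at h ⊢
  have hfin : Module.Finite R (Abelian.Ext (ModuleCat.of R A) (ModuleCat.of R M) i) :=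
    ModuleCat.finite_ext R (ModuleCat.of R A) (ModuleCat.of R M) i
  have key : (⊤ : Submodule R (Abelian.Ext (ModuleCat.of R A) (ModuleCat.of R M) i)) ≤
      maximalIdeal R • ⊤ := by
    intro y _
    obtain ⟨z, rfl⟩ := Abelian.Ext.contravariant_sequence_exact₁
      (shortExact_of_linearMap (f := LinearMap.lsmul R A x) hreg hg hfg) _ y (add_comm 1 i)
      (h.elim _ _)
    exact (mk₀_lsmul_comp_ext x z).symm ▸ Submodule.smul_mem_smul hx Submodule.mem_top
  have := Submodule.eq_bot_of_le_smul_of_le_jacobson_bot (maximalIdeal R) ⊤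
    Module.Finite.fg_top key (IsLocalRing.maximalIdeal_le_jacobson _)
  exact (Submodule.subsingleton_iff R).mp (subsingleton_iff_bot_eq_top.mp this.symm)

end ExtVanishing

section InjectiveDimension

variable {R : Type u} [CommRing R] {M : Type u} [AddCommGroup M] [Module R M]

lemma ExtVanish.of_subsingleton_derived {N : Type u} [AddCommGroup N] [Module R N] {i : ℕ}
    (h : Subsingleton (((Ext R (ModuleCat.{u} R) (i + 1)).obj
      (Opposite.op (ModuleCat.of R N))).obj (ModuleCat.of R M))) :
    ExtVanish R N M (i + 1) := by
  refine subsingleton_of_forall_eq 0 fun α ↦ ?_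
  let P := ProjectiveResolution.of (ModuleCat.of R N)
  obtain ⟨f, hf, rfl⟩ := P.extMk_surjective α (i + 2) rfl
  rw [P.extMk_eq_zero_iff f (i + 2) rfl hf i rfl]
  have hz := (ModuleCat.isZero_of_subsingleton _).of_iso
    (P.isoExt (R := R) (i + 1) (ModuleCat.of R M)).symm
  rw [← HomologicalComplex.exactAt_iff_isZero_homology,
    HomologicalComplex.exactAt_iff' _ i (i + 1) (i + 2) (by simp) (by simp),
    ShortComplex.moduleCat_exact_iff] at hz
  obtain ⟨g, hg⟩ := hz f hf
  exact ⟨g, hg⟩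

lemma extVanish_of_hasFiniteInjDim (h : Module.HasFiniteInjDim R M) :
    ∃ n : ℕ, ∀ (N : Type u) [AddCommGroup N] [Module R N] (i : ℕ), n < i →
      ExtVanish R N M i := by
  obtain ⟨n, hn⟩ := h
  refine ⟨n, fun N _ _ i hi ↦ ?_⟩
  obtain ⟨i, rfl⟩ := Nat.exists_eq_succ_of_ne_zero (Nat.ne_zero_of_lt hi)
  exact .of_subsingleton_derived (hn (ModuleCat.of R N) (i + 1) hi)

end InjectiveDimension

section Depth

variable {R : Type u} [CommRing R] {M N : Type u} [AddCommGroup M] [Module R M]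
  [AddCommGroup N] [Module R N]

lemma ExtVanish.quotSMulTop {x : R} (hx : IsSMulRegular N x) {i : ℕ} (h : ExtVanish R N M i)
    (h' : ExtVanish R N M (i + 1)) : ExtVanish R (QuotSMulTop x N) M (i + 1) :=
  .right_of_exact (f := LinearMap.lsmul R N x) hx (Submodule.mkQ_surjective _)
    (LinearMap.exact_lsmul_mkQ_smul_top N x) h h'

lemma ExtVanish.quotSMulTop_covariant {x : R} (hx : IsSMulRegular M x) {i : ℕ}
    (h : ExtVanish R N M i) (h' : ExtVanish R N M (i + 1)) :
    ExtVanish R N (QuotSMulTop x M) i :=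
  .right_of_exact_covariant (f := LinearMap.lsmul R M x) hx (Submodule.mkQ_surjective _)
    (LinearMap.exact_lsmul_mkQ_smul_top M x) h h'

/-- The quotient of a module by the submodule generated by the empty list. -/
noncomputable def quotOfListNilEquiv (R M : Type u) [CommRing R] [AddCommGroup M] [Module R M] :
    (M ⧸ (Ideal.ofList ([] : List R) • ⊤ : Submodule R M)) ≃ₗ[R] M :=
  Submodule.quotEquivOfEqBot _ (by simp)

lemma ExtVanish.quotOfList {rs : List R} (hrs : IsWeaklyRegular N rs) {s : ℕ}
    (h : ∀ i, s < i → ExtVanish R N M i) {i : ℕ} (hi : s + rs.length < i) :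
    ExtVanish R (N ⧸ (Ideal.ofList rs • ⊤ : Submodule R N)) M i := by
  induction rs generalizing N s with
  | nil => exact (h i hi).of_linearEquiv (quotOfListNilEquiv R N).symm
  | cons x rs ih =>
    rw [isWeaklyRegular_cons_iff] at hrs
    rw [List.length_cons] at hi
    refine (ih hrs.2 (s := s + 1) (fun j hj ↦ ?_) (by omega)).of_linearEquiv
      (Submodule.quotOfListConsSMulTopEquivQuotSMulTopInner N x rs).symm
    obtain ⟨j, rfl⟩ := Nat.exists_eq_succ_of_ne_zero (Nat.ne_zero_of_lt hj)
    exact .quotSMulTop hrs.1 (h j (by omega)) (h (j + 1) (by omega))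

lemma isSMulRegular_quotient_prime {p : Ideal R} [p.IsPrime] {x : R} (hxp : x ∉ p) :
    IsSMulRegular (R ⧸ p) x := by
  refine (isSMulRegular_iff_right_eq_zero_of_smul).mpr fun y hy ↦ ?_
  rw [Algebra.smul_def, mul_eq_zero] at hy
  exact hy.resolve_left fun h ↦ hxp (Ideal.Quotient.eq_zero_iff_mem.mp h)

lemma annihilator_le_of_mem_associatedPrimes {p : Ideal R} (hp : p ∈ associatedPrimes R M) :
    Module.annihilator R M ≤ p :=
  Submodule.annihilator_top (R := R) (M := M) ▸ IsAssociatedPrime.annihilator_le hp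

lemma eq_natCast_sub_of_add_eq {z : WithBot ℕ∞} {m n : ℕ} (h : z + (m : WithBot ℕ∞) = n) :
    z = ((n - m : ℕ) : WithBot ℕ∞) ∧ m ≤ n := by
  induction z with
  | bot => exact absurd h.symm (WithBot.coe_ne_bot (a := (n : ℕ∞)))
  | coe z =>
    have h' : z + (m : ℕ∞) = n := by exact_mod_cast h
    induction z with
    | top => exact absurd h'.symm (ENat.natCast_ne_top n)
    | coe z =>
      have h'' : z + m = n := by exact_mod_cast h'
      subst h''
      simp

lemma exists_natCast_of_lt {z : WithBot ℕ∞} (hz : z ≠ ⊥) {n : ℕ} (h : z < n) :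
    ∃ s : ℕ, z = s ∧ s < n := by
  induction z with
  | bot => exact absurd rfl hz
  | coe z =>
    have h' : z < (n : ℕ∞) := by exact_mod_cast h
    induction z with
    | top => simp at h'
    | coe z => exact ⟨z, rfl, by exact_mod_cast h'⟩

variable [IsLocalRing R] [IsNoetherianRing R] [Module.Finite R M]

lemma supportDim_quotOfList {rs : List R} (hrs : IsRegular R rs) {n : ℕ}
    (hdim : ringKrullDim R = n) :
    Module.supportDim R (R ⧸ (Ideal.ofList rs • ⊤ : Ideal R)) =
      ((n - rs.length : ℕ) : WithBot ℕ∞) ∧ rs.length ≤ n := by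
  have h := Module.supportDim_add_length_eq_supportDim_of_isRegular rs hrs
  rw [Module.supportDim_self_eq_ringKrullDim, hdim] at h
  exact eq_natCast_sub_of_add_eq h

lemma exists_injective_residue_of_supportDim_eq_zero (hM : Module.supportDim R M = 0) :
    ∃ f : (R ⧸ maximalIdeal R) →ₗ[R] M, Function.Injective f := by
  have : Nontrivial M := by
    by_contra h
    rw [not_nontrivial_iff_subsingleton] at h
    rw [Module.supportDim_eq_bot_of_subsingleton] at hM
    exact absurd hM (by decide)
  obtain ⟨q, hq⟩ := associatedPrimes.nonempty R M
  obtain ⟨hqp, f, hf⟩ := (isAssociatedPrime_iff_exists_injective_linearMap q M).mp hq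
  obtain rfl : q = maximalIdeal R := by
    have h := support_of_supportDim_eq_zero R M hM
    have hmem : (⟨q, hqp⟩ : PrimeSpectrum R) ∈ Module.support R M := by
      rw [Module.support_eq_zeroLocus]
      exact annihilator_le_of_mem_associatedPrimes hq
    rw [h] at hmem
    exact le_antisymm (IsLocalRing.le_maximalIdeal hqp.ne_top) hmem
  exact ⟨f, hf⟩

lemma ExtVanish.quotient_prime {p : Ideal R} [p.IsPrime] {x : R} (hx : x ∈ maximalIdeal R)
    (hxp : x ∉ p) {i : ℕ} (h : ExtVanish R (QuotSMulTop x (R ⧸ p)) M (i + 1)) :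
    ExtVanish R (R ⧸ p) M i :=
  .of_injective_lsmul hx (isSMulRegular_quotient_prime hxp) (Submodule.mkQ_surjective _)
    (LinearMap.exact_lsmul_mkQ_smul_top (R ⧸ p) x) h

/-- A finite module of finite injective dimension over a Cohen–Macaulay local ring has
injective dimension at most `dim R`, tested on finite modules. -/
lemma extVanish_of_length_lt {rs : List R} (hrs : IsRegular R rs)
    (hdim : ringKrullDim R = rs.length) (hM : Module.HasFiniteInjDim R M)
    [Module.Finite R N] {i : ℕ} (hi : rs.length < i) : ExtVanish R N M i := by
  obtain ⟨n, hn⟩ := extVanish_of_hasFiniteInjDim hM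
  suffices H : ∀ (j i : ℕ), rs.length < i → n < i + j →
      ∀ (N : Type u) [AddCommGroup N] [Module R N] [Module.Finite R N], ExtVanish R N M i from
    H (n + 1) i hi (by omega) N
  intro j
  induction j with
  | zero => exact fun i _ hi N _ _ _ ↦ hn N i hi
  | succ j ih =>
    intro i hi hij N _ _ hN
    have hsucc := ih (i + 1) (by omega) (by omega)
    induction hN using IsNoetherianRing.induction_on_isQuotientEquivQuotientPrime R with
    | subsingleton N => exact .of_subsingleton_left i
    | exact N₁ N₂ N₃ f g hf hg hfg h₁ h₃ => exact .middle_of_exact hf hg hfg h₁ h₃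
    | quotient N p e =>
      refine ExtVanish.of_linearEquiv e.symm ?_
      have := p.2
      by_cases hp : p.1 = maximalIdeal R
      · let Q := R ⧸ (Ideal.ofList rs • ⊤ : Submodule R R)
        obtain ⟨f, hf⟩ := exists_injective_residue_of_supportDim_eq_zero (M := Q)
          ((supportDim_quotOfList hrs hdim).1.trans (by simp))
        rw [hp]
        refine .left_of_exact hf (Submodule.mkQ_surjective _) (LinearMap.exact_map_mkQ_range f)
          ?_ (hsucc _)
        refine ExtVanish.quotOfList hrs.1 (s := 0) (fun j hj ↦ ?_) (by omega)
        obtain ⟨j, rfl⟩ := Nat.exists_eq_succ_of_ne_zero hj.ne'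
        exact .of_projective j
      · obtain ⟨x, hx, hxp⟩ := SetLike.exists_of_lt
          (lt_of_le_of_ne (IsLocalRing.le_maximalIdeal p.2.ne_top) hp)
        exact .quotient_prime hx hxp (hsucc _)

lemma ExtVanish.of_isWeaklyRegular {n : ℕ} (hM : ∀ (N : Type u) [AddCommGroup N] [Module R N]
      [Module.Finite R N] (i : ℕ), n < i → ExtVanish R N M i)
    [Module.Finite R N] {rs : List R} (hrs : IsWeaklyRegular N rs)
    (hmem : ∀ r ∈ rs, r ∈ maximalIdeal R) {i : ℕ} (hi : n < i + rs.length) :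
    ExtVanish R N M i := by
  induction rs generalizing N i with
  | nil => exact hM N i hi
  | cons x rs ih =>
    rw [isWeaklyRegular_cons_iff] at hrs
    rw [List.length_cons] at hi
    rw [List.forall_mem_cons] at hmem
    exact .of_injective_lsmul hmem.1 hrs.1 (Submodule.mkQ_surjective _)
      (LinearMap.exact_lsmul_mkQ_smul_top N x) (ih hrs.2 hmem.2 (by omega))

/-- Ischebeck: if `Ext^i(k, M) = 0` for `i < t`, then `Ext^i(N, M) = 0` for
`i < t - dim N`. -/
lemma ExtVanish.of_supportDim_le {t : ℕ}
    (hM : ∀ i < t, ExtVanish R (R ⧸ maximalIdeal R) M i) [hN : Module.Finite R N] {r : ℕ}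
    (hr : Module.supportDim R N ≤ r) {i : ℕ} (hi : i + r < t) : ExtVanish R N M i := by
  induction r using Nat.strong_induction_on generalizing N i with
  | _ r ihr =>
    induction hN using IsNoetherianRing.induction_on_isQuotientEquivQuotientPrime R with
    | subsingleton N => exact .of_subsingleton_left i
    | exact N₁ N₂ N₃ f g hf hg hfg h₁ h₃ =>
      exact .middle_of_exact hf hg hfg (h₁ ((Module.supportDim_le_of_injective f hf).trans hr))
        (h₃ ((Module.supportDim_le_of_surjective g hg).trans hr))
    | quotient N p e =>
      refine ExtVanish.of_linearEquiv e.symm ?_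
      have := p.2
      by_cases hp : p.1 = maximalIdeal R
      · rw [hp]
        exact hM i (by omega)
      · obtain ⟨x, hx, hxp⟩ := SetLike.exists_of_lt
          (lt_of_le_of_ne (IsLocalRing.le_maximalIdeal p.2.ne_top) hp)
        have h := Module.supportDim_quotSMulTop_succ_eq_supportDim
          (isSMulRegular_quotient_prime hxp) hx
        rw [← Module.supportDim_eq_of_equiv e] at h
        have : Nontrivial (QuotSMulTop x (R ⧸ p.1)) :=
          nontrivial_quotSMulTop_of_mem_maximalIdeal _ hx
        have h0 := Module.supportDim_ne_bot_of_nontrivial R (QuotSMulTop x (R ⧸ p.1))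
        obtain ⟨s, hs, hsr⟩ := exists_natCast_of_lt h0
          (lt_of_not_ge fun h' ↦ absurd ((add_le_add_left h' 1).trans (h.trans_le hr))
            (by exact_mod_cast Nat.not_succ_le_self r))
        exact .quotient_prime hx hxp (ihr s hsr hs.le (by omega))

lemma extVanish_residue_of_isRegular {rs : List R} (hrs : IsRegular M rs)
    (hmem : ∀ r ∈ rs, r ∈ maximalIdeal R) (i : ℕ) (hi : i < rs.length) :
    ExtVanish R (R ⧸ maximalIdeal R) M i := by
  have := hrs.nontrivial
  refine ModuleCat.subsingleton_ext_of_exists_isRegular (maximalIdeal R)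
    (ModuleCat.of R (R ⧸ maximalIdeal R)) ?_ (ModuleCat.of R M) ?_ rs hmem hrs i hi
  · rw [Module.support_eq_zeroLocus, Ideal.annihilator_quotient]
  · exact (Submodule.top_ne_ideal_smul_of_le_jacobson_annihilator
      (IsLocalRing.maximalIdeal_le_jacobson _)).symm.lt_top

lemma exists_isRegular_of_extVanish_residue [Nontrivial M] {t : ℕ}
    (h : ∀ i < t, ExtVanish R (R ⧸ maximalIdeal R) M i) :
    ∃ rs : List R, rs.length = t ∧ (∀ r ∈ rs, r ∈ maximalIdeal R) ∧ IsRegular M rs := by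
  refine ModuleCat.exists_isRegular_of_exists_subsingleton_ext (maximalIdeal R) t
    (ModuleCat.of R M) ?_ (ModuleCat.of R (R ⧸ maximalIdeal R)) ?_ h
  · exact (Submodule.top_ne_ideal_smul_of_le_jacobson_annihilator
      (IsLocalRing.maximalIdeal_le_jacobson _)).symm.lt_top
  · rw [Module.support_eq_zeroLocus, Ideal.annihilator_quotient]

end Depth

section ChangeOfRings

variable {R : Type u} [CommRing R] {M : Type u} [AddCommGroup M] [Module R M]

open Abelian

/-- Multiplication by `x` on `M` acts on `Ext` as scalar multiplication by `x`. -/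
lemma ext_comp_mk₀_lsmul {L : ModuleCat.{u} R} {i : ℕ} (x : R) (z : Ext L (ModuleCat.of R M) i) :
    z.comp (Ext.mk₀ (ModuleCat.ofHom (LinearMap.lsmul R M x))) (add_zero i) = x • z := by
  have : ModuleCat.ofHom (LinearMap.lsmul R M x) = x • 𝟙 (ModuleCat.of R M) := rfl
  rw [this, Ext.mk₀_smul, Ext.comp_smul, Ext.comp_mk₀_id]

lemma smul_ext_eq_zero {N : ModuleCat.{u} R} {i : ℕ} {x : R} (hx : x ∈ Module.annihilator R M)
    (z : Ext (ModuleCat.of R M) N i) : x • z = 0 := by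
  have : LinearMap.lsmul R M x = 0 := LinearMap.ext fun m ↦ Module.mem_annihilator.mp hx m
  rw [← mk₀_lsmul_comp_ext, this, ModuleCat.ofHom_zero, Ext.mk₀_zero, Ext.zero_comp]

lemma shortExact_lsmul {x : R} (hx : IsSMulRegular M x) :
    (ModuleCat.shortComplexOfCompEqZero (LinearMap.lsmul R M x) (Submodule.mkQ (x • ⊤))
      (LinearMap.exact_lsmul_mkQ_smul_top M x).linearMap_comp_eq_zero).ShortExact :=
  shortExact_of_linearMap (f := LinearMap.lsmul R M x) hx (Submodule.mkQ_surjective _)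
    (LinearMap.exact_lsmul_mkQ_smul_top M x)

lemma exists_comp_extClass_eq {x : R} (hx : IsSMulRegular M x) {L : Type u} [AddCommGroup L]
    [Module R L] (hL : x ∈ Module.annihilator R L) {i : ℕ}
    (z : Ext (ModuleCat.of R L) (ModuleCat.of R M) (i + 1)) :
    ∃ y : Ext (ModuleCat.of R L) (ModuleCat.of R (QuotSMulTop x M)) i,
      y.comp (shortExact_lsmul hx).extClass rfl = z :=
  Ext.covariant_sequence_exact₁ _ (shortExact_lsmul hx) z
    ((ext_comp_mk₀_lsmul x z).trans (smul_ext_eq_zero hL z)) rfl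

lemma ExtVanish.of_mem_annihilator {rs : List R} (hrs : IsWeaklyRegular M rs) {L : Type u}
    [AddCommGroup L] [Module R L] (hL : ∀ r ∈ rs, r ∈ Module.annihilator R L) {i : ℕ}
    (hi : i < rs.length) : ExtVanish R L M i := by
  induction rs generalizing M i with
  | nil => simp at hi
  | cons x rs ih =>
    rw [isWeaklyRegular_cons_iff] at hrs
    rw [List.forall_mem_cons] at hL
    cases i with
    | zero =>
      rw [extVanish_zero_iff]
      refine subsingleton_of_forall_eq 0 fun f ↦ LinearMap.ext fun l ↦ hrs.1 ?_
      simp [← map_smul, Module.mem_annihilator.mp hL.1 l]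
    | succ i =>
      refine subsingleton_of_forall_eq 0 fun z ↦ ?_
      obtain ⟨y, rfl⟩ := exists_comp_extClass_eq hrs.1 hL.1 z
      have : Subsingleton (Ext (ModuleCat.of R L) (ModuleCat.of R (QuotSMulTop x M)) i) :=
        ih hrs.2 hL.2 (by simpa using hi)
      rw [Subsingleton.elim y 0, Ext.zero_comp]

/-- For a weakly `M`-regular sequence `rs` of length `g`, there is a class in
`Ext^g(M/rsM, M)` inducing `Hom(L, M/rsM) ≅ Ext^g(L, M)` for all `L` killed by `rs`. -/
lemma exists_bijective_comp_ext {rs : List R} (hrs : IsWeaklyRegular M rs) :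
    ∃ e : Ext (ModuleCat.of R (M ⧸ (Ideal.ofList rs • ⊤ : Submodule R M))) (ModuleCat.of R M)
        rs.length, ∀ (L : Type u) [AddCommGroup L] [Module R L],
      (∀ r ∈ rs, r ∈ Module.annihilator R L) →
        Function.Bijective fun f : L →ₗ[R] M ⧸ (Ideal.ofList rs • ⊤ : Submodule R M) ↦
          (Ext.mk₀ (ModuleCat.ofHom f)).comp e (zero_add _) := by
  induction rs generalizing M with
  | nil =>
    let φ := quotOfListNilEquiv R M
    refine ⟨Ext.mk₀ φ.toModuleIso.hom, fun L _ _ _ ↦ ?_⟩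
    have hφ : Function.Bijective fun f : L →ₗ[R] _ ↦ φ.toLinearMap ∘ₗ f :=
      (φ.congrRight (M := L)).bijective
    simp only [Ext.mk₀_comp_mk₀]
    exact ((Ext.mk₀_bijective _ _).comp (ModuleCat.homEquiv (M := ModuleCat.of R L)
      (N := ModuleCat.of R M)).symm.bijective).comp hφ
  | cons x rs ih =>
    have hrs' := hrs
    rw [isWeaklyRegular_cons_iff] at hrs
    obtain ⟨e, he⟩ := ih hrs.2
    let φ := Submodule.quotOfListConsSMulTopEquivQuotSMulTopInner M x rs
    refine ⟨(Ext.mk₀ φ.toModuleIso.hom).comp (e.comp (shortExact_lsmul hrs.1).extClass rfl)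
      (zero_add _), fun L _ _ hL ↦ ?_⟩
    have hvan : ExtVanish R L M rs.length := .of_mem_annihilator hrs' hL (by simp)
    rw [List.forall_mem_cons] at hL
    have hδ : Function.Bijective fun y : Ext (ModuleCat.of R L)
        (ModuleCat.of R (QuotSMulTop x M)) rs.length ↦
          y.comp (shortExact_lsmul hrs.1).extClass rfl := by
      refine ⟨?_, exists_comp_extClass_eq hrs.1 hL.1⟩
      refine (injective_iff_map_eq_zero
        ((shortExact_lsmul hrs.1).extClass.postcomp (ModuleCat.of R L) rfl)).mpr fun y hy ↦ ?_
      obtain ⟨w, rfl⟩ := Ext.covariant_sequence_exact₃ _ (shortExact_lsmul hrs.1) y rfl hy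
      rw [hvan.elim w 0, Ext.zero_comp]
    have hφ : Function.Bijective fun f : L →ₗ[R] M ⧸ (Ideal.ofList (x :: rs) • ⊤ :
        Submodule R M) ↦ φ.toLinearMap ∘ₗ f :=
      (φ.congrRight (M := L)).bijective
    refine Eq.mp (congrArg _ (funext fun f ↦ ?_)) ((hδ.comp (he L hL.2)).comp hφ)
    simp only [Function.comp_apply]
    rw [Ext.mk₀_comp_mk₀_assoc, Ext.comp_assoc _ _ _ (zero_add _) rfl (by omega)]
    rfl

end ChangeOfRings

section ChangeOfRingsApplications

variable {R : Type u} [CommRing R] {M : Type u} [AddCommGroup M] [Module R M]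

open Abelian

lemma extLinearEquiv_of_isWeaklyRegular {rs : List R} (hrs : IsWeaklyRegular M rs) (L : Type u)
    [AddCommGroup L] [Module R L] (hL : ∀ r ∈ rs, r ∈ Module.annihilator R L) :
    Nonempty ((L →ₗ[R] M ⧸ (Ideal.ofList rs • ⊤ : Submodule R M)) ≃ₗ[R]
      Ext (ModuleCat.of R L) (ModuleCat.of R M) rs.length) := by
  obtain ⟨e, he⟩ := exists_bijective_comp_ext hrs
  let F : (L →ₗ[R] M ⧸ (Ideal.ofList rs • ⊤ : Submodule R M)) →ₗ[R]
      Ext (ModuleCat.of R L) (ModuleCat.of R M) rs.length :=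
    { toFun f := (Ext.mk₀ (ModuleCat.ofHom f)).comp e (zero_add _)
      map_add' f g := by rw [ModuleCat.ofHom_add, Ext.mk₀_add, Ext.add_comp]
      map_smul' r f := by
        rw [show ModuleCat.ofHom (r • f) = r • ModuleCat.ofHom f from rfl, Ext.mk₀_smul,
          Ext.smul_comp, RingHom.id_apply] }
  exact ⟨.ofBijective F (he L hL)⟩

lemma exists_comp_eq_of_extVanish {rs : List R} (hrs : IsWeaklyRegular M rs) {A B C : Type u}
    [AddCommGroup A] [Module R A] [AddCommGroup B] [Module R B] [AddCommGroup C] [Module R C]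
    {f : A →ₗ[R] B} {g : B →ₗ[R] C} (hf : Function.Injective f)
    (hg : Function.Surjective g) (hfg : Function.Exact f g)
    (hB : ∀ r ∈ rs, r ∈ Module.annihilator R B) (hC : ExtVanish R C M (rs.length + 1))
    (h : A →ₗ[R] M ⧸ (Ideal.ofList rs • ⊤ : Submodule R M)) :
    ∃ h' : B →ₗ[R] M ⧸ (Ideal.ofList rs • ⊤ : Submodule R M), h' ∘ₗ f = h := by
  obtain ⟨e, he⟩ := exists_bijective_comp_ext hrs
  obtain ⟨z, hz⟩ := Ext.contravariant_sequence_exact₁ (shortExact_of_linearMap hf hg hfg) _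
    ((Ext.mk₀ (ModuleCat.ofHom h)).comp e (zero_add _)) (add_comm 1 _) (hC.elim _ _)
  obtain ⟨h', rfl⟩ := (he B hB).2 z
  refine ⟨h', (he A fun r hr ↦ f.annihilator_le_of_injective hf (hB r hr)).1 ?_⟩
  rw [Ext.mk₀_comp_mk₀_assoc] at hz
  exact hz

lemma supportDim_quotient_le_of_le {I p : Ideal R} (h : I ≤ p) :
    Module.supportDim R (R ⧸ p) ≤ Module.supportDim R (R ⧸ I) :=
  Module.supportDim_le_of_surjective (Submodule.factor h) (Submodule.factor_surjective h)

lemma le_annihilator_quotient_smul_top (I : Ideal R) :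
    I ≤ Module.annihilator R (M ⧸ (I • ⊤ : Submodule R M)) := by
  intro r hr
  rw [Module.mem_annihilator]
  intro m
  induction m using Submodule.Quotient.induction_on with
  | H m =>
    exact (Submodule.Quotient.mk_eq_zero (I • ⊤ : Submodule R M)).mpr
      (Submodule.smul_mem_smul hr Submodule.mem_top)

lemma ofList_le_of_mem_associatedPrimes {rs : List R} {p : Ideal R}
    (hp : p ∈ associatedPrimes R (M ⧸ (Ideal.ofList rs • ⊤ : Submodule R M))) :
    Ideal.ofList rs ≤ p :=
  (le_annihilator_quotient_smul_top _).trans (annihilator_le_of_mem_associatedPrimes hp)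

lemma not_extVanish_of_mem_associatedPrimes [IsNoetherianRing R] {rs : List R}
    (hrs : IsWeaklyRegular M rs) {p : Ideal R}
    (hp : p ∈ associatedPrimes R (M ⧸ (Ideal.ofList rs • ⊤ : Submodule R M))) :
    ¬ ExtVanish R (R ⧸ p) M rs.length := by
  intro h
  obtain ⟨hpp, f, hf⟩ := (isAssociatedPrime_iff_exists_injective_linearMap p _).mp hp
  obtain ⟨e⟩ := extLinearEquiv_of_isWeaklyRegular hrs (R ⧸ p) fun r hr ↦ by
    rw [Ideal.annihilator_quotient]
    exact ofList_le_of_mem_associatedPrimes hp (Ideal.subset_span hr)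
  have := e.toEquiv.subsingleton_congr.mpr h
  have hf0 : f 1 = f 0 := by rw [Subsingleton.elim f 0]; rfl
  exact one_ne_zero (hf hf0)

end ChangeOfRingsApplications

section MaximalCohenMacaulay

variable {R : Type u} [CommRing R] [IsLocalRing R] [IsNoetherianRing R] {M : Type u}
  [AddCommGroup M] [Module R M] [Module.Finite R M] {n : ℕ}

lemma le_supportDim_of_not_extVanish (hM : ∀ i < n, ExtVanish R (R ⧸ maximalIdeal R) M i)
    {N : Type u} [AddCommGroup N] [Module R N] [Module.Finite R N] {i : ℕ}
    (h : ¬ ExtVanish R N M i) : ((n - i : ℕ) : WithBot ℕ∞) ≤ Module.supportDim R N := by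
  have : Nontrivial N := by
    by_contra hN
    rw [not_nontrivial_iff_subsingleton] at hN
    exact h (.of_subsingleton_left i)
  by_contra! hlt
  obtain ⟨s, hs, hsr⟩ := exists_natCast_of_lt (Module.supportDim_ne_bot_of_nontrivial R N) hlt
  exact h (.of_supportDim_le hM hs.le (by omega))

lemma isWeaklyRegular_of_isWeaklyRegular_self (hdim : ringKrullDim R = n)
    (hM : ∀ i < n, ExtVanish R (R ⧸ maximalIdeal R) M i) {rs : List R}
    (hmem : ∀ r ∈ rs, r ∈ maximalIdeal R) (hrs : IsWeaklyRegular R rs) :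
    IsWeaklyRegular M rs := by
  induction rs using List.reverseRecOn with
  | nil => exact .nil R M
  | append_singleton rs x ih =>
    have hreg := (IsLocalRing.isRegular_iff_isWeaklyRegular_of_subset_maximalIdeal hmem).mpr hrs
    obtain ⟨hdimq, hlen⟩ := supportDim_quotOfList hreg hdim
    rw [isWeaklyRegular_append_iff] at hrs ⊢
    have hrsM := ih (fun r hr ↦ hmem r (by simp [hr])) hrs.1
    refine ⟨hrsM, (isWeaklyRegular_singleton_iff _ _).mpr ?_⟩
    by_contra hx
    obtain ⟨p, hp, hxp⟩ : ∃ p ∈ associatedPrimes R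
        (M ⧸ (Ideal.ofList rs • ⊤ : Submodule R M)), x ∈ p := by
      have h : x ∈ {r | IsSMulRegular (M ⧸ (Ideal.ofList rs • ⊤ : Submodule R M)) r}ᶜ := hx
      rw [← biUnion_associatedPrimes_eq_compl_regular] at h
      simpa using h
    have h1 := le_supportDim_of_not_extVanish hM (not_extVanish_of_mem_associatedPrimes hrsM hp)
    have hle : (Ideal.ofList (rs ++ [x]) • ⊤ : Ideal R) ≤ p := by
      rw [smul_eq_mul, Ideal.mul_top, Ideal.ofList_append, Ideal.ofList_singleton, sup_le_iff,
        Ideal.span_singleton_le_iff_mem]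
      exact ⟨ofList_le_of_mem_associatedPrimes hp, hxp⟩
    have h2 := h1.trans ((supportDim_quotient_le_of_le hle).trans hdimq.le)
    have h3 : n - rs.length ≤ n - (rs ++ [x]).length := by exact_mod_cast h2
    rw [List.length_append, List.length_singleton] at h3 hlen
    omega

end MaximalCohenMacaulay

section Lifting

variable {R : Type u} [CommRing R] {M N : Type u} [AddCommGroup M] [Module R M]
  [AddCommGroup N] [Module R N]

open Abelian

lemma exists_mkQ_comp_eq_quotSMulTop {x : R} (hx : IsSMulRegular M x) (h : ExtVanish R N M 1)
    (f : N →ₗ[R] QuotSMulTop x M) :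
    ∃ f' : N →ₗ[R] M, (Submodule.mkQ (x • ⊤ : Submodule R M)) ∘ₗ f' = f := by
  obtain ⟨z, hz⟩ := Ext.covariant_sequence_exact₃ (ModuleCat.of R N) (shortExact_lsmul hx)
    (Ext.mk₀ (ModuleCat.ofHom f)) (zero_add 1) (h.elim _ _)
  obtain ⟨f', rfl⟩ := (Ext.mk₀_bijective _ _).2 z
  refine ⟨f'.hom, ?_⟩
  rw [Ext.mk₀_comp_mk₀] at hz
  exact congrArg ModuleCat.Hom.hom ((Ext.mk₀_bijective _ _).1 hz)

lemma exists_mkQ_comp_eq {rs : List R} (hrs : IsWeaklyRegular M rs)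
    (h : ∀ i, ExtVanish R N M (i + 1))
    (f : N →ₗ[R] M ⧸ (Ideal.ofList rs • ⊤ : Submodule R M)) :
    ∃ f' : N →ₗ[R] M, (Submodule.mkQ (Ideal.ofList rs • ⊤ : Submodule R M)) ∘ₗ f' = f := by
  induction rs generalizing M with
  | nil =>
    refine ⟨(quotOfListNilEquiv R M).toLinearMap ∘ₗ f, LinearMap.ext fun n ↦ ?_⟩
    exact (quotOfListNilEquiv R M).symm_apply_apply (f n)
  | cons x rs ih =>
    rw [isWeaklyRegular_cons_iff] at hrs
    let φ := Submodule.quotOfListConsSMulTopEquivQuotSMulTopInner M x rs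
    obtain ⟨f₁, hf₁⟩ := ih hrs.2 (fun i ↦ .quotSMulTop_covariant hrs.1 (h i) (h (i + 1)))
      (φ.toLinearMap ∘ₗ f)
    obtain ⟨f₂, rfl⟩ := exists_mkQ_comp_eq_quotSMulTop hrs.1 (h 0) f₁
    refine ⟨f₂, LinearMap.ext fun n ↦ φ.injective ?_⟩
    exact LinearMap.congr_fun hf₁ n

lemma mem_smul_top_of_range_le {rs : List R} (hrs : IsWeaklyRegular M rs)
    (h : ∀ i, ExtVanish R N M (i + 1)) {f : N →ₗ[R] M}
    (hf : ∀ n, f n ∈ (Ideal.ofList rs • ⊤ : Submodule R M)) :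
    f ∈ (Ideal.ofList rs • ⊤ : Submodule R (N →ₗ[R] M)) := by
  induction rs generalizing M with
  | nil =>
    obtain rfl : f = 0 := LinearMap.ext fun n ↦ by simpa using hf n
    exact zero_mem _
  | cons x rs ih =>
    rw [isWeaklyRegular_cons_iff] at hrs
    let π := (x • ⊤ : Submodule R M).mkQ
    have hπf : π ∘ₗ f ∈ (Ideal.ofList rs • ⊤ : Submodule R (N →ₗ[R] QuotSMulTop x M)) := by
      refine ih hrs.2 (fun i ↦ .quotSMulTop_covariant hrs.1 (h i) (h (i + 1))) fun n ↦ ?_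
      have hn := Submodule.mem_map_of_mem (f := π) (hf n)
      rw [Ideal.ofList_cons_smul, Submodule.map_sup, Submodule.map_smul'', Submodule.map_top,
        Submodule.range_mkQ, (Submodule.mkQ_map_self _ : Submodule.map π _ = ⊥), bot_sup_eq] at hn
      exact hn
    have htop : (⊤ : Submodule R (N →ₗ[R] QuotSMulTop x M)) =
        Submodule.map (LinearMap.compRight R π) ⊤ := by
      rw [Submodule.map_top, eq_comm, LinearMap.range_eq_top]
      exact exists_mkQ_comp_eq_quotSMulTop hrs.1 (h 0)
    rw [htop, ← Submodule.map_smul''] at hπf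
    obtain ⟨f₁, hf₁, hf₁'⟩ := hπf
    have hsub : ∀ n, ∃ m, x • m = f n - f₁ n := fun n ↦ by
      have : f n - f₁ n ∈ (x • ⊤ : Submodule R M) :=
        (Submodule.Quotient.eq _).mp (LinearMap.congr_fun hf₁' n).symm
      obtain ⟨m, -, hm⟩ := this
      exact ⟨m, hm⟩
    choose f₂ hf₂ using hsub
    let f₃ : N →ₗ[R] M :=
      { toFun := f₂
        map_add' := fun a b ↦ hrs.1 (by simp only [smul_add, hf₂, map_add]; abel)
        map_smul' := fun r a ↦ hrs.1 (by
          simp only [hf₂, map_smul, smul_comm x, RingHom.id_apply, smul_sub]) }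
    have hf₃ : f = x • f₃ + f₁ := LinearMap.ext fun n ↦ by
      simp only [LinearMap.add_apply, LinearMap.smul_apply]
      exact sub_eq_iff_eq_add.mp (hf₂ n).symm
    rw [Ideal.ofList_cons_smul, hf₃]
    exact Submodule.add_mem_sup (Submodule.smul_mem_pointwise_smul _ _ _ trivial) hf₁

variable {rs : List R}

lemma exists_smul_eq_of_bijective_lsmul (hend : Function.Bijective (LinearMap.lsmul R M))
    (hrs : IsWeaklyRegular M rs) (h : ∀ i, ExtVanish R M M (i + 1))
    (f : M →ₗ[R] M ⧸ (Ideal.ofList rs • ⊤ : Submodule R M)) :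
    ∃ r : R, ∀ m, f m = r • Submodule.Quotient.mk m := by
  obtain ⟨f', rfl⟩ := exists_mkQ_comp_eq hrs h f
  obtain ⟨r, rfl⟩ := hend.2 f'
  exact ⟨r, fun m ↦ rfl⟩

lemma annihilator_quotient_ofList (hend : Function.Bijective (LinearMap.lsmul R M))
    (hrs : IsWeaklyRegular M rs) (h : ∀ i, ExtVanish R M M (i + 1)) :
    Module.annihilator R (M ⧸ (Ideal.ofList rs • ⊤ : Submodule R M)) = Ideal.ofList rs := by
  refine le_antisymm (fun r hr ↦ ?_) (le_annihilator_quotient_smul_top _)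
  have hmem : LinearMap.lsmul R M r ∈ (Ideal.ofList rs • ⊤ : Submodule R (M →ₗ[R] M)) :=
    mem_smul_top_of_range_le hrs h fun m ↦ (Submodule.Quotient.mk_eq_zero _).mp
      (Module.mem_annihilator.mp hr (Submodule.Quotient.mk m))
  rw [← LinearMap.range_eq_top.mpr hend.2, ← Submodule.map_top, ← Submodule.map_smul''] at hmem
  obtain ⟨s, hs, hsr⟩ := hmem
  rw [← hend.1 hsr]
  simpa using hs

end Lifting

section ExtRegular

variable {R : Type u} [CommRing R] {M N : Type u} [AddCommGroup M] [Module R M]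
  [AddCommGroup N] [Module R N]

open Abelian

lemma isSMulRegular_ext {y : R} (hy : IsSMulRegular N y) {j : ℕ}
    (h : ExtVanish R (QuotSMulTop y N) M j) :
    IsSMulRegular (Ext (ModuleCat.of R N) (ModuleCat.of R M) j) y := by
  refine isSMulRegular_iff_right_eq_zero_of_smul.mpr fun z hz ↦ ?_
  obtain ⟨w, rfl⟩ := Ext.contravariant_sequence_exact₂ (shortExact_lsmul hy) _ z
    ((mk₀_lsmul_comp_ext y z).trans hz)
  rw [h.elim w 0, Ext.comp_zero]

lemma quotSMulTop_extLinearEquiv {y : R} (hy : IsSMulRegular N y) {j : ℕ}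
    (h : ExtVanish R N M (j + 1)) :
    Nonempty (QuotSMulTop y (Ext (ModuleCat.of R N) (ModuleCat.of R M) j) ≃ₗ[R]
      Ext (ModuleCat.of R (QuotSMulTop y N)) (ModuleCat.of R M) (j + 1)) := by
  have hS := shortExact_lsmul hy
  let δ : Ext (ModuleCat.of R N) (ModuleCat.of R M) j →ₗ[R]
      Ext (ModuleCat.of R (QuotSMulTop y N)) (ModuleCat.of R M) (j + 1) :=
    { toFun z := hS.extClass.comp z (add_comm 1 j)
      map_add' z w := Ext.comp_add ..
      map_smul' r z := Ext.comp_smul .. }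
  have hsurj : Function.Surjective δ := fun w ↦
    Ext.contravariant_sequence_exact₃ hS _ w (h.elim _ _) (add_comm 1 j)
  have hker : (y • ⊤ : Submodule R (Ext (ModuleCat.of R N) (ModuleCat.of R M) j)) =
      LinearMap.ker δ := by
    refine le_antisymm ?_ fun z hz ↦ ?_
    · rintro _ ⟨z, -, rfl⟩
      refine (map_smul δ y z).trans (smul_ext_eq_zero (Module.mem_annihilator.mpr fun m ↦ ?_) _)
      induction m using Submodule.Quotient.induction_on with
      | H m =>
        exact (Submodule.Quotient.mk_eq_zero (y • ⊤ : Submodule R N)).mpr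
          (Submodule.smul_mem_pointwise_smul _ _ _ trivial)
    · obtain ⟨w, rfl⟩ := Ext.contravariant_sequence_exact₁ hS _ z (add_comm 1 j) hz
      exact (mk₀_lsmul_comp_ext y w).symm ▸ Submodule.smul_mem_pointwise_smul _ _ _ trivial
  exact ⟨(Submodule.quotEquivOfEq _ _ hker).trans (δ.quotKerEquivOfSurjective hsurj)⟩

lemma le_natCast_of_add_one_le {z : WithBot ℕ∞} {n : ℕ} (h : z + 1 ≤ ((n + 1 : ℕ) : WithBot ℕ∞)) :
    z ≤ n := by
  induction z with
  | bot => exact bot_le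
  | coe z =>
    have h' : z + 1 ≤ (n : ℕ∞) + 1 := by exact_mod_cast h
    exact_mod_cast (ENat.add_le_add_iff_right ENat.one_ne_top).mp h'

variable [IsLocalRing R] [IsNoetherianRing R] [Module.Finite R M] {n : ℕ}

/-- A maximal regular sequence of a Cohen–Macaulay module `N` of dimension `n - j` is
weakly regular on the dual module `Ext^j(N, M)`. -/
lemma isWeaklyRegular_ext (hk : ∀ i < n, ExtVanish R (R ⧸ maximalIdeal R) M i)
    (hM : ∀ (N : Type u) [AddCommGroup N] [Module R N] [Module.Finite R N] (i : ℕ), n < i →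
      ExtVanish R N M i) [Module.Finite R N] {ys : List R} (hys : IsWeaklyRegular N ys)
    (hmem : ∀ y ∈ ys, y ∈ maximalIdeal R) {j : ℕ} (hj : j + ys.length = n)
    (hdim : Module.supportDim R N ≤ ys.length) :
    IsWeaklyRegular (Ext (ModuleCat.of R N) (ModuleCat.of R M) j) ys := by
  induction ys generalizing N j with
  | nil => exact .nil R _
  | cons y ys ih =>
    have hvan : ExtVanish R N M (j + 1) := .of_isWeaklyRegular hM hys hmem (by omega)
    rw [isWeaklyRegular_cons_iff] at hys
    rw [List.forall_mem_cons] at hmem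
    rw [List.length_cons] at hj hdim
    have hdim' : Module.supportDim R (QuotSMulTop y N) ≤ ys.length :=
      le_natCast_of_add_one_le
        ((Module.supportDim_quotSMulTop_succ_eq_supportDim hys.1 hmem.1).trans_le hdim)
    rw [isWeaklyRegular_cons_iff]
    obtain ⟨e⟩ := quotSMulTop_extLinearEquiv hys.1 hvan
    exact ⟨isSMulRegular_ext hys.1 (.of_supportDim_le hk hdim' (by omega)),
      (e.isWeaklyRegular_congr ys).mpr (ih hys.2 hmem.2 (by omega) hdim')⟩

end ExtRegular

section CovariantVanishing

variable {R : Type u} [CommRing R] {M : Type u} [AddCommGroup M] [Module R M]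

lemma ExtVanish.of_linearEquiv_covariant {A B N : Type u} [AddCommGroup A] [Module R A]
    [AddCommGroup B] [Module R B] [AddCommGroup N] [Module R N] (e : A ≃ₗ[R] B) {i : ℕ}
    (h : ExtVanish R N A i) : ExtVanish R N B i := by
  unfold ExtVanish at *
  refine subsingleton_of_forall_eq 0 fun x ↦ ?_
  rw [← Abelian.Ext.comp_mk₀_id x, ← e.toModuleIso.inv_hom_id, ← Abelian.Ext.mk₀_comp_mk₀,
    ← Abelian.Ext.comp_assoc_of_third_deg_zero, h.elim (Abelian.Ext.comp x _ _) 0,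
    Abelian.Ext.zero_comp]

lemma ExtVanish.quotOfList_covariant {N : Type u} [AddCommGroup N] [Module R N] {rs : List R}
    (hrs : IsWeaklyRegular M rs) {t : ℕ} (h : ∀ i < t, ExtVanish R N M i) {i : ℕ}
    (hi : i + rs.length < t) :
    ExtVanish R N (M ⧸ (Ideal.ofList rs • ⊤ : Submodule R M)) i := by
  induction rs generalizing M t with
  | nil => exact (h i hi).of_linearEquiv_covariant (quotOfListNilEquiv R M).symm
  | cons x rs ih =>
    rw [isWeaklyRegular_cons_iff] at hrs
    rw [List.length_cons] at hi
    exact (ih hrs.2 (t := t - 1) (fun j hj ↦ .quotSMulTop_covariant hrs.1 (h j (by omega))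
      (h (j + 1) (by omega))) (by omega)).of_linearEquiv_covariant
        (Submodule.quotOfListConsSMulTopEquivQuotSMulTopInner M x rs).symm

lemma extVanish_left_of_exact_covariant {A B C N : Type u} [AddCommGroup A] [Module R A]
    [AddCommGroup B] [Module R B] [AddCommGroup C] [Module R C] [AddCommGroup N] [Module R N]
    {f : A →ₗ[R] B} {g : B →ₗ[R] C} (hf : Function.Injective f) (hg : Function.Surjective g)
    (hfg : Function.Exact f g) {t : ℕ} (hB : ∀ i < t, ExtVanish R N B i)
    (hC : ∀ i < t, ExtVanish R N C i) (i : ℕ) (hi : i < t) : ExtVanish R N A i := by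
  cases i with
  | zero =>
    have := extVanish_zero_iff.mp (hB 0 hi)
    refine extVanish_zero_iff.mpr (subsingleton_of_forall_eq 0 fun h ↦ LinearMap.ext fun n ↦ hf ?_)
    rw [LinearMap.zero_apply, map_zero]
    exact LinearMap.congr_fun (Subsingleton.elim (f ∘ₗ h) 0) n
  | succ i => exact .left_of_exact_covariant hf hg hfg (hB _ hi) (hC i (by omega))

end CovariantVanishing

section SupportDim

variable {R : Type u} [CommRing R] {M : Type u} [AddCommGroup M] [Module R M] [Module.Finite R M]

lemma dim_eq_supportDim : Module.dim R M = Module.supportDim R M :=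
  (Module.supportDim_eq_ringKrullDim_quotient_annihilator R M).symm

lemma supportDim_le_of_le_annihilator {c : Ideal R} (h : c ≤ Module.annihilator R M) :
    Module.supportDim R M ≤ Module.supportDim R (R ⧸ c) := by
  rw [Module.supportDim_eq_ringKrullDim_quotient_annihilator,
    ← Module.supportDim_quotient_eq_ringKrullDim]
  exact supportDim_quotient_le_of_le h

lemma supportDim_quotient_le_of_annihilator_le {p : Ideal R} (h : Module.annihilator R M ≤ p) :
    Module.supportDim R (R ⧸ p) ≤ Module.supportDim R M := by
  rw [Module.supportDim_eq_ringKrullDim_quotient_annihilator R M,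
    ← Module.supportDim_quotient_eq_ringKrullDim]
  exact supportDim_quotient_le_of_le h

end SupportDim

section CohenMacaulay

variable {R : Type u} [CommRing R] [IsLocalRing R] {M : Type u} [AddCommGroup M] [Module R M]

lemma exists_isRegular_length_eq_grade [Nontrivial M] :
    ∃ rs : List R, rs.length = Module.grade R (maximalIdeal R) M ∧
      (∀ r ∈ rs, r ∈ maximalIdeal R) ∧ IsRegular M rs := by
  by_cases h : Module.grade R (maximalIdeal R) M = 0
  · exact ⟨[], h.symm, by simp, .nil R M⟩
  · refine Nat.sSup_mem (Set.nonempty_iff_ne_empty.mpr fun he ↦ h ?_)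
      (by_contra fun hb ↦ h (Nat.sSup_of_not_bddAbove hb))
    rw [Module.grade, he, csSup_empty, Nat.bot_eq_zero]

variable [Module.Finite R M]

lemma exists_isRegular_of_isCM (h : Module.IsCM R M) {d : ℕ}
    (hdim : Module.supportDim R M = d) :
    ∃ rs : List R, rs.length = d ∧ (∀ r ∈ rs, r ∈ maximalIdeal R) ∧ IsRegular M rs := by
  have : Nontrivial M := (Module.supportDim_ne_bot_iff_nontrivial R M).mp
    (hdim ▸ WithBot.coe_ne_bot (a := (d : ℕ∞)))
  obtain ⟨rs, hlen, hrs⟩ := exists_isRegular_length_eq_grade (R := R) (M := M)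
  rw [Module.IsCM, dim_eq_supportDim, hdim] at h
  refine ⟨rs, hlen.trans ?_, hrs⟩
  exact_mod_cast (show ((Module.grade R (maximalIdeal R) M : ℕ) : WithBot ℕ∞) = (d : ℕ) from h)

variable [IsNoetherianRing R]

lemma isCM_of_isWeaklyRegular {rs : List R} (hrs : IsWeaklyRegular M rs)
    (hmem : ∀ r ∈ rs, r ∈ maximalIdeal R) (hdim : Module.supportDim R M = rs.length) :
    Module.IsCM R M := by
  have : Nontrivial M := (Module.supportDim_ne_bot_iff_nontrivial R M).mp
    (hdim ▸ WithBot.coe_ne_bot (a := (rs.length : ℕ∞)))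
  have hgrade : Module.grade R (maximalIdeal R) M = rs.length := by
    refine IsGreatest.csSup_eq ⟨⟨rs, rfl, hmem,
      .of_isWeaklyRegular_of_mem_maximalIdeal _ hmem hrs⟩, ?_⟩
    rintro _ ⟨rs', rfl, -, hrs'⟩
    have h := Module.supportDim_add_length_eq_supportDim_of_isRegular rs' hrs'
    rw [hdim] at h
    exact (eq_natCast_sub_of_add_eq h).2
  rw [Module.IsCM, hgrade, dim_eq_supportDim, hdim]
  rfl

end CohenMacaulay

section CanonicalModule

/-- The homological properties of a canonical module `ω` of a Cohen–Macaulay local ring of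
dimension `n` that enter the linkage argument. -/
structure IsCanonicalOfDim (R ω : Type u) [CommRing R] [IsLocalRing R] [AddCommGroup ω]
    [Module R ω] (n : ℕ) : Prop where
  ringKrullDim_eq : ringKrullDim R = n
  extVanish_residue_self : ∀ i < n, ExtVanish R (R ⧸ maximalIdeal R) R i
  extVanish_residue : ∀ i < n, ExtVanish R (R ⧸ maximalIdeal R) ω i
  extVanish_of_lt : ∀ (N : Type u) [AddCommGroup N] [Module R N] [Module.Finite R N] (i : ℕ),
    n < i → ExtVanish R N ω i
  extVanish_self : ∀ i, ExtVanish R ω ω (i + 1)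
  bijective_lsmul : Function.Bijective (LinearMap.lsmul R ω)

variable {R ω : Type u} [CommRing R] [IsLocalRing R] [IsNoetherianRing R] [AddCommGroup ω]
  [Module R ω] [Module.Finite R ω]

lemma isCanonicalOfDim_of_isCanonicalModule
    (hCM : (Module.grade R (maximalIdeal R) R : WithBot (WithTop ℕ)) = ringKrullDim R)
    (hω : IsCanonicalModule R ω) :
    IsCanonicalOfDim R ω (Module.grade R (maximalIdeal R) R) := by
  obtain ⟨-, hinj, hgrade, hend⟩ := hω
  have : Nontrivial ω := by
    by_contra h
    rw [not_nontrivial_iff_subsingleton] at h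
    exact one_ne_zero (hend.1 (Subsingleton.elim (LinearMap.lsmul R ω 1) (LinearMap.lsmul R ω 0)))
  obtain ⟨rs, hlen, hmem, hrs⟩ := exists_isRegular_length_eq_grade (R := R) (M := R)
  obtain ⟨ts, hlen', hmem', hts⟩ := exists_isRegular_length_eq_grade (R := R) (M := ω)
  have heq : Module.grade R (maximalIdeal R) ω = Module.grade R (maximalIdeal R) R := by
    exact_mod_cast (show ((Module.grade R (maximalIdeal R) ω : ℕ) : WithBot ℕ∞) =
      (Module.grade R (maximalIdeal R) R : ℕ) from hgrade.trans hCM.symm)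
  have hdim : ringKrullDim R = (Module.grade R (maximalIdeal R) R : ℕ) := hCM.symm
  have hlt : ∀ (N : Type u) [AddCommGroup N] [Module R N] [Module.Finite R N] (i : ℕ),
      Module.grade R (maximalIdeal R) R < i → ExtVanish R N ω i := fun N _ _ _ i hi ↦
    extVanish_of_length_lt hrs (hlen ▸ hdim) hinj (hlen ▸ hi)
  exact
    { ringKrullDim_eq := hdim
      extVanish_residue_self i hi := extVanish_residue_of_isRegular hrs hmem i (hlen ▸ hi)
      extVanish_residue i hi :=
        extVanish_residue_of_isRegular hts hmem' i (by rwa [hlen', heq])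
      extVanish_of_lt := hlt
      extVanish_self i := .of_isWeaklyRegular hlt hts.1 hmem' (by omega)
      bijective_lsmul := hend }

end CanonicalModule

lemma mem_maximalIdeal_of_isRegular {R : Type u} [CommRing R] [IsLocalRing R] {rs : List R}
    (hrs : IsRegular R rs) :
    ∀ r ∈ rs, r ∈ maximalIdeal R := by
  intro r hr
  refine le_maximalIdeal (J := Ideal.ofList rs) (fun h ↦ hrs.2 ?_) (Ideal.subset_span hr)
  rw [h, smul_eq_mul, Ideal.mul_top]

namespace IsCanonicalOfDim

variable {R ω : Type u} [CommRing R] [IsLocalRing R] [AddCommGroup ω] [Module R ω] {n : ℕ}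
  {rs : List R}

lemma extVanish_residue_quotient_self (hω : IsCanonicalOfDim R ω n) (hrs : IsRegular R rs)
    (i : ℕ) (hi : i < n - rs.length) :
    ExtVanish R (R ⧸ maximalIdeal R) (R ⧸ Ideal.ofList rs) i :=
  .of_linearEquiv_covariant
    (Submodule.quotEquivOfEq _ _ (by rw [smul_eq_mul, Ideal.mul_top]))
    (.quotOfList_covariant hrs.1 hω.extVanish_residue_self (i := i) (by omega))

variable [IsNoetherianRing R]

lemma length_le (hω : IsCanonicalOfDim R ω n) (hrs : IsRegular R rs) : rs.length ≤ n :=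
  (supportDim_quotOfList hrs hω.ringKrullDim_eq).2

lemma supportDim_quotient_ofList (hω : IsCanonicalOfDim R ω n) (hrs : IsRegular R rs) :
    Module.supportDim R (R ⧸ Ideal.ofList rs) = ((n - rs.length : ℕ) : WithBot ℕ∞) := by
  have h := (supportDim_quotOfList hrs hω.ringKrullDim_eq).1
  rwa [smul_eq_mul, Ideal.mul_top] at h

lemma supportDim_le_of_ofList_le (hω : IsCanonicalOfDim R ω n) (hrs : IsRegular R rs)
    {N : Type u} [AddCommGroup N] [Module R N] [Module.Finite R N]
    (h : Ideal.ofList rs ≤ Module.annihilator R N) :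
    Module.supportDim R N ≤ ((n - rs.length : ℕ) : WithBot ℕ∞) :=
  (supportDim_le_of_le_annihilator h).trans (hω.supportDim_quotient_ofList hrs).le

variable [Module.Finite R ω]

lemma isWeaklyRegular (hω : IsCanonicalOfDim R ω n) (hrs : IsRegular R rs) :
    IsWeaklyRegular ω rs :=
  isWeaklyRegular_of_isWeaklyRegular_self hω.ringKrullDim_eq hω.extVanish_residue
    (mem_maximalIdeal_of_isRegular hrs) hrs.1

lemma annihilator_quotient (hω : IsCanonicalOfDim R ω n) (hrs : IsRegular R rs) :
    Module.annihilator R (ω ⧸ (Ideal.ofList rs • ⊤ : Submodule R ω)) = Ideal.ofList rs :=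
  annihilator_quotient_ofList hω.bijective_lsmul (hω.isWeaklyRegular hrs) hω.extVanish_self

lemma le_supportDim_of_injective (hω : IsCanonicalOfDim R ω n) (hrs : IsRegular R rs)
    {N : Type u} [AddCommGroup N] [Module R N] [Module.Finite R N] [Nontrivial N]
    (f : N →ₗ[R] ω ⧸ (Ideal.ofList rs • ⊤ : Submodule R ω)) (hf : Function.Injective f) :
    ((n - rs.length : ℕ) : WithBot ℕ∞) ≤ Module.supportDim R N := by
  obtain ⟨q, hq⟩ := associatedPrimes.nonempty R N
  refine (le_supportDim_of_not_extVanish hω.extVanish_residue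
    (not_extVanish_of_mem_associatedPrimes (hω.isWeaklyRegular hrs)
      (associatedPrimes.subset_of_injective hf hq))).trans ?_
  exact supportDim_quotient_le_of_annihilator_le (annihilator_le_of_mem_associatedPrimes hq)

lemma extVanish_residue_quotient (hω : IsCanonicalOfDim R ω n) (hrs : IsRegular R rs) (i : ℕ)
    (hi : i < n - rs.length) :
    ExtVanish R (R ⧸ maximalIdeal R) (ω ⧸ (Ideal.ofList rs • ⊤ : Submodule R ω)) i :=
  .quotOfList_covariant (hω.isWeaklyRegular hrs) hω.extVanish_residue (by omega)

/-- The dual `Hom(N, ω/Iω)` of a maximal Cohen–Macaulay `R/I`-module `N` admits a weakly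
regular sequence of length `dim R/I`. -/
lemma exists_isWeaklyRegular_linearMap (hω : IsCanonicalOfDim R ω n) (hrs : IsRegular R rs)
    {N : Type u} [AddCommGroup N] [Module R N] [Module.Finite R N] [Nontrivial N]
    (hN : Ideal.ofList rs ≤ Module.annihilator R N)
    (h : ∀ i < n - rs.length, ExtVanish R (R ⧸ maximalIdeal R) N i) :
    ∃ ys : List R, ys.length = n - rs.length ∧ (∀ y ∈ ys, y ∈ maximalIdeal R) ∧
      IsWeaklyRegular (N →ₗ[R] ω ⧸ (Ideal.ofList rs • ⊤ : Submodule R ω)) ys := by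
  obtain ⟨ys, hlen, hmem, hys⟩ := exists_isRegular_of_extVanish_residue h
  obtain ⟨e⟩ := extLinearEquiv_of_isWeaklyRegular (hω.isWeaklyRegular hrs) N
    fun r hr ↦ hN (Ideal.subset_span hr)
  have := hω.length_le hrs
  exact ⟨ys, hlen, hmem, (e.isWeaklyRegular_congr ys).mpr
    (isWeaklyRegular_ext hω.extVanish_residue hω.extVanish_of_lt hys.1 hmem (by omega)
      (hlen ▸ hω.supportDim_le_of_ofList_le hrs hN))⟩

/-- A module annihilated by `I` with vanishing dual `Hom(K, ω/Iω)` has no associated prime of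
dimension `dim R/I`. -/
lemma supportDim_quotient_ne_of_subsingleton_linearMap (hω : IsCanonicalOfDim R ω n)
    (hrs : IsRegular R rs) {K : Type u} [AddCommGroup K] [Module R K] [Module.Finite R K]
    (hsub : Subsingleton (K →ₗ[R] ω ⧸ (Ideal.ofList rs • ⊤ : Submodule R ω)))
    (hK : Ideal.ofList rs ≤ Module.annihilator R K) {p : Ideal R}
    (hp : p ∈ associatedPrimes R K) :
    Module.supportDim R (R ⧸ p) ≠ ((n - rs.length : ℕ) : WithBot ℕ∞) := by
  intro hpd
  obtain ⟨r, hr, hreg⟩ := IsSMulRegular.subsingleton_linearMap_iff.mp hsub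
  have hKp := annihilator_le_of_mem_associatedPrimes hp
  have hprime : p.IsPrime := hp.1
  have hle : Module.supportDim R (R ⧸ p) ≤
      Module.supportDim R (QuotSMulTop r (ω ⧸ (Ideal.ofList rs • ⊤ : Submodule R ω))) := by
    have hmem : (⟨p, hprime⟩ : PrimeSpectrum R) ∈
        Module.support R (QuotSMulTop r (ω ⧸ (Ideal.ofList rs • ⊤ : Submodule R ω))) := by
      rw [Module.support_quotSMulTop]
      refine ⟨?_, ?_⟩
      · rw [Module.support_eq_zeroLocus, hω.annihilator_quotient hrs]
        exact hK.trans hKp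
      · simpa using hKp hr
    rw [Module.support_eq_zeroLocus] at hmem
    exact supportDim_quotient_le_of_annihilator_le hmem
  have hrm : r ∈ maximalIdeal R := le_maximalIdeal hprime.ne_top (hKp hr)
  have hsucc := Module.supportDim_quotSMulTop_succ_eq_supportDim hreg hrm
  have hW := hω.supportDim_le_of_ofList_le hrs (hω.annihilator_quotient hrs).ge
  rw [hpd] at hle
  have h1 := (add_le_add_left hle 1).trans (hsucc.le.trans hW)
  have h2 : (((n - rs.length) + 1 : ℕ) : WithBot ℕ∞) ≤ ((n - rs.length : ℕ) : WithBot ℕ∞) := by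
    exact_mod_cast h1
  have h3 : n - rs.length + 1 ≤ n - rs.length := by exact_mod_cast h2
  omega

end IsCanonicalOfDim

lemma isUnmixed_of_isCM {R : Type u} [CommRing R] [IsLocalRing R] [IsNoetherianRing R]
    {N : Type u} [AddCommGroup N] [Module R N] [Module.Finite R N] {d : ℕ}
    (hdim : Module.supportDim R N = d) (h : Module.IsCM R N) : Module.IsUnmixed R N := by
  obtain ⟨xs, hlen, hmem, hxs⟩ := exists_isRegular_of_isCM h hdim
  intro p hp
  rw [dim_eq_supportDim, ← Module.supportDim_quotient_eq_ringKrullDim]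
  refine le_antisymm (supportDim_quotient_le_of_annihilator_le
    (annihilator_le_of_mem_associatedPrimes hp)) ?_
  rw [hdim]
  refine le_supportDim_of_not_extVanish (i := 0)
    (hlen ▸ extVanish_residue_of_isRegular hxs hmem) ?_
  rw [extVanish_zero_iff]
  obtain ⟨hprime, f, hf⟩ := (isAssociatedPrime_iff_exists_injective_linearMap p N).mp hp
  intro hsub
  have : (1 : R ⧸ p) = 0 := hf (by rw [Subsingleton.elim f 0]; rfl)
  exact hprime.ne_top (Ideal.Quotient.zero_eq_one_iff.mp this.symm)

section Colon

variable {R : Type u} [CommRing R]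

lemma mem_colonBy_iff {M : Type*} [AddCommGroup M] [Module R M] {N : Submodule R M}
    {a : Ideal R} {m : M} : m ∈ N.colonBy a ↔ ∀ s ∈ a, s • m ∈ N := by
  simp [Submodule.colonBy]

lemma smul_mem_smul_top_of_mem_colonBy {M : Type*} [AddCommGroup M] [Module R M]
    {a I : Ideal R} {r : R} (hr : r ∈ (I : Submodule R R).colonBy a) {m : M}
    (hm : m ∈ (a • ⊤ : Submodule R M)) : r • m ∈ (I • ⊤ : Submodule R M) := by
  refine Submodule.smul_induction_on hm (fun s hs x _ ↦ ?_) fun x y hx hy ↦ ?_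
  · rw [smul_smul, mul_comm]
    exact Submodule.smul_mem_smul (mem_colonBy_iff.mp hr s hs) trivial
  · rw [smul_add]
    exact add_mem hx hy

lemma smul_mem_ker_factor_eq_zero {M : Type*} [AddCommGroup M] [Module R M]
    {a I : Ideal R} (ha : I ≤ a)
    (w : LinearMap.ker (Submodule.factor
      (Submodule.smul_mono_left ha : (I • ⊤ : Submodule R M) ≤ a • ⊤))) {r : R}
    (hr : r ∈ (I : Submodule R R).colonBy a) : r • w = 0 := by
  obtain ⟨w, hw⟩ := w
  obtain ⟨m, rfl⟩ := Submodule.mkQ_surjective _ w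
  ext
  rw [Submodule.coe_smul, ← map_smul]
  exact (Submodule.Quotient.mk_eq_zero _).mpr (smul_mem_smul_top_of_mem_colonBy hr
    ((Submodule.Quotient.mk_eq_zero _).mp (LinearMap.mem_ker.mp hw)))

end Colon

namespace IsCanonicalOfDim

variable {R ω : Type u} [CommRing R] [IsLocalRing R] [IsNoetherianRing R] [AddCommGroup ω]
  [Module R ω] [Module.Finite R ω] {n : ℕ} {rs : List R} {a b : Ideal R}

lemma mem_colonBy_of_smul_mem (hω : IsCanonicalOfDim R ω n) (hrs : IsRegular R rs) {r : R}
    (h : ∀ m ∈ (a • ⊤ : Submodule R ω), r • m ∈ (Ideal.ofList rs • ⊤ : Submodule R ω)) :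
    r ∈ (Ideal.ofList rs : Submodule R R).colonBy a := by
  rw [mem_colonBy_iff]
  intro s hs
  rw [← hω.annihilator_quotient hrs, Module.mem_annihilator]
  intro w
  obtain ⟨m, rfl⟩ := Submodule.mkQ_surjective _ w
  rw [← map_smul, Submodule.mkQ_apply, Submodule.Quotient.mk_eq_zero, smul_eq_mul, mul_comm,
    mul_smul]
  exact h _ (Submodule.smul_mem_smul hs trivial)

lemma nontrivial_ker_factor (hω : IsCanonicalOfDim R ω n) (hrs : IsRegular R rs)
    (ha : Ideal.ofList rs ≤ a) (hne : a ≠ Ideal.ofList rs) :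
    Nontrivial (LinearMap.ker (Submodule.factor
      (Submodule.smul_mono_left ha :
        (Ideal.ofList rs • ⊤ : Submodule R ω) ≤ a • ⊤))) := by
  rw [Submodule.nontrivial_iff_ne_bot]
  intro h
  refine hne (le_antisymm (fun s hs ↦ ?_) ha)
  rw [← hω.annihilator_quotient hrs, Module.mem_annihilator]
  intro w
  obtain ⟨m, rfl⟩ := Submodule.mkQ_surjective _ w
  rw [← Submodule.mem_bot R, ← h, ← map_smul, LinearMap.mem_ker]
  exact (Submodule.Quotient.mk_eq_zero _).mpr (Submodule.smul_mem_smul hs trivial)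

lemma supportDim_quotient_of_colonBy_eq (hω : IsCanonicalOfDim R ω n) (hrs : IsRegular R rs)
    (ha : Ideal.ofList rs ≤ a) (hne : a ≠ Ideal.ofList rs) (hb : Ideal.ofList rs ≤ b)
    (hcolon : (Ideal.ofList rs : Submodule R R).colonBy a = b) :
    Module.supportDim R (R ⧸ b) = ((n - rs.length : ℕ) : WithBot ℕ∞) := by
  refine le_antisymm (hω.supportDim_le_of_ofList_le hrs (by rwa [Ideal.annihilator_quotient])) ?_
  have := hω.nontrivial_ker_factor hrs ha hne
  refine (hω.le_supportDim_of_injective hrs (Submodule.subtype _)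
    (Submodule.subtype_injective (LinearMap.ker (Submodule.factor
      (Submodule.smul_mono_left ha :
        (Ideal.ofList rs • ⊤ : Submodule R ω) ≤ a • ⊤))))).trans ?_
  refine supportDim_le_of_le_annihilator fun r hr ↦ Module.mem_annihilator.mpr fun w ↦ ?_
  exact smul_mem_ker_factor_eq_zero ha w (hcolon ▸ hr)

lemma supportDim_quotient_smul_top (hω : IsCanonicalOfDim R ω n) (hrs : IsRegular R rs)
    (ha : Ideal.ofList rs ≤ a) (hb : Ideal.ofList rs ≤ b) (hne : b ≠ Ideal.ofList rs)
    (hcolon : (Ideal.ofList rs : Submodule R R).colonBy a = b) :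
    Module.supportDim R (ω ⧸ (a • ⊤ : Submodule R ω)) =
      ((n - rs.length : ℕ) : WithBot ℕ∞) := by
  refine le_antisymm (hω.supportDim_le_of_ofList_le hrs
    (ha.trans (le_annihilator_quotient_smul_top a))) ?_
  obtain ⟨r, hr, hr'⟩ := SetLike.exists_of_lt (lt_of_le_of_ne hb hne.symm)
  rw [← hω.annihilator_quotient hrs, Module.mem_annihilator] at hr'
  push Not at hr'
  obtain ⟨w, hw⟩ := hr'
  obtain ⟨m, rfl⟩ := Submodule.mkQ_surjective _ w
  let f : (ω ⧸ (a • ⊤ : Submodule R ω)) →ₗ[R] ω ⧸ (Ideal.ofList rs • ⊤ : Submodule R ω) :=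
    Submodule.mapQ _ _ (LinearMap.lsmul R ω r) fun x hx ↦
      smul_mem_smul_top_of_mem_colonBy (hcolon ▸ hr) hx
  have : Nontrivial (LinearMap.range f) :=
    (Submodule.nontrivial_iff_ne_bot).mpr fun h ↦ hw <| by
      rw [← Submodule.mem_bot R, ← h]
      exact ⟨Submodule.Quotient.mk m, rfl⟩
  exact (hω.le_supportDim_of_injective hrs _
    (Submodule.subtype_injective (LinearMap.range f))).trans
    (Module.supportDim_le_of_surjective _ f.surjective_rangeRestrict)

lemma exists_smul_eq (hω : IsCanonicalOfDim R ω n) (hrs : IsRegular R rs)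
    (f : ω →ₗ[R] ω ⧸ (Ideal.ofList rs • ⊤ : Submodule R ω)) :
    ∃ r : R, ∀ m, f m = r • Submodule.Quotient.mk m :=
  exists_smul_eq_of_bijective_lsmul hω.bijective_lsmul (hω.isWeaklyRegular hrs)
    hω.extVanish_self f

lemma extVanish_length_add_one (hω : IsCanonicalOfDim R ω n) (hrs : IsRegular R rs)
    {N : Type u} [AddCommGroup N] [Module R N] [Module.Finite R N] {xs : List R}
    (hxs : IsWeaklyRegular N xs) (hmem : ∀ x ∈ xs, x ∈ maximalIdeal R)
    (hlen : xs.length = n - rs.length) : ExtVanish R N ω (rs.length + 1) :=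
  .of_isWeaklyRegular hω.extVanish_of_lt hxs hmem (by have := hω.length_le hrs; omega)

lemma isCM_quotient_of_isCM (hω : IsCanonicalOfDim R ω n) (hrs : IsRegular R rs)
    (ha : Ideal.ofList rs ≤ a) (hb : Ideal.ofList rs ≤ b) (hane : a ≠ Ideal.ofList rs)
    (hbne : b ≠ Ideal.ofList rs) (hcolon : (Ideal.ofList rs : Submodule R R).colonBy a = b)
    (h : Module.IsCM R (ω ⧸ (a • ⊤ : Submodule R ω))) : Module.IsCM R (R ⧸ b) := by
  obtain ⟨xs, hlen, hmem, hxs⟩ := exists_isRegular_of_isCM h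
    (hω.supportDim_quotient_smul_top hrs ha hb hbne hcolon)
  have hle : (Ideal.ofList rs • ⊤ : Submodule R ω) ≤ a • ⊤ := Submodule.smul_mono_left ha
  have : Nontrivial (LinearMap.ker (Submodule.factor hle)) :=
    hω.nontrivial_ker_factor hrs ha hane
  have hexact := LinearMap.exact_subtype_ker_map (Submodule.factor hle)
  have hinj := Submodule.subtype_injective (LinearMap.ker (Submodule.factor hle))
  have hsurj := Submodule.factor_surjective hle
  obtain ⟨ys, hylen, hymem, hys⟩ := hω.exists_isWeaklyRegular_linearMap hrs
    ((hω.annihilator_quotient hrs).ge.trans (LinearMap.annihilator_le_of_injective _ hinj))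
    (extVanish_left_of_exact_covariant hinj hsurj hexact (hω.extVanish_residue_quotient hrs)
      (hlen ▸ extVanish_residue_of_isRegular hxs hmem))
  let φ : R →ₗ[R] LinearMap.ker (Submodule.factor hle) →ₗ[R]
      ω ⧸ (Ideal.ofList rs • ⊤ : Submodule R ω) := LinearMap.toSpanSingleton R _
        (Submodule.subtype _)
  have hφ : Function.Surjective φ := by
    intro f
    obtain ⟨f', hf'⟩ := exists_comp_eq_of_extVanish (hω.isWeaklyRegular hrs) hinj hsurj hexact
      (fun r hr ↦ (hω.annihilator_quotient hrs).ge (Ideal.subset_span hr))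
      (hω.extVanish_length_add_one hrs hxs.1 hmem hlen) f
    obtain ⟨r, hr⟩ := hω.exists_smul_eq hrs (f' ∘ₗ Submodule.mkQ _)
    refine ⟨r, LinearMap.ext fun w ↦ ?_⟩
    obtain ⟨w, hw⟩ := w
    obtain ⟨m, rfl⟩ := Submodule.mkQ_surjective _ w
    rw [← hf']
    exact (hr m).symm
  have hker : LinearMap.ker φ = b := by
    ext r
    refine ⟨fun hr ↦ ?_, fun hr ↦ LinearMap.ext fun w ↦ ?_⟩
    · rw [← hcolon]
      refine hω.mem_colonBy_of_smul_mem hrs fun m hm ↦ ?_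
      rw [← Submodule.Quotient.mk_eq_zero]
      exact LinearMap.congr_fun (LinearMap.mem_ker.mp hr)
        ⟨Submodule.Quotient.mk m, (Submodule.Quotient.mk_eq_zero _).mpr hm⟩
    · exact congrArg Subtype.val (smul_mem_ker_factor_eq_zero ha w (hcolon ▸ hr))
  let e : (R ⧸ b) ≃ₗ[R] _ :=
    Submodule.quotEquivOfEq _ _ hker.symm ≪≫ₗ φ.quotKerEquivOfSurjective hφ
  exact isCM_of_isWeaklyRegular ((e.isWeaklyRegular_congr ys).mpr hys) hymem
    (hylen ▸ hω.supportDim_quotient_of_colonBy_eq hrs ha hane hb hcolon)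

lemma isCM_of_isUnmixed_of_isCM_quotient (hω : IsCanonicalOfDim R ω n) (hrs : IsRegular R rs)
    (ha : Ideal.ofList rs ≤ a) (hb : Ideal.ofList rs ≤ b) (hane : a ≠ Ideal.ofList rs)
    (hbne : b ≠ Ideal.ofList rs) (hcolon : (Ideal.ofList rs : Submodule R R).colonBy a = b)
    (hunm : Module.IsUnmixed R (ω ⧸ (a • ⊤ : Submodule R ω)))
    (h : Module.IsCM R (R ⧸ b)) : Module.IsCM R (ω ⧸ (a • ⊤ : Submodule R ω)) := by
  have hXdim := hω.supportDim_quotient_smul_top hrs ha hb hbne hcolon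
  have hXann : Ideal.ofList rs ≤ Module.annihilator R (ω ⧸ (a • ⊤ : Submodule R ω)) :=
    ha.trans (le_annihilator_quotient_smul_top a)
  obtain ⟨zs, hlen, hmem, hzs⟩ := exists_isRegular_of_isCM h
    (hω.supportDim_quotient_of_colonBy_eq hrs ha hane hb hcolon)
  let g : (R ⧸ Ideal.ofList rs) →ₗ[R] R ⧸ b := Submodule.factor hb
  have hexact := LinearMap.exact_subtype_ker_map g
  have hinj := Submodule.subtype_injective (LinearMap.ker g)
  have hsurj : Function.Surjective g := Submodule.factor_surjective hb
  have : Nontrivial (LinearMap.ker g) := by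
    obtain ⟨r, hr, hr'⟩ := SetLike.exists_of_lt (lt_of_le_of_ne hb hbne.symm)
    rw [Submodule.nontrivial_iff_ne_bot]
    intro hbot
    have hmk : (Ideal.Quotient.mk (Ideal.ofList rs) r) ∈ LinearMap.ker g :=
      LinearMap.mem_ker.mpr (Ideal.Quotient.eq_zero_iff_mem.mpr hr)
    rw [hbot, Submodule.mem_bot] at hmk
    exact hr' (Ideal.Quotient.eq_zero_iff_mem.mp hmk)
  have hRann : Ideal.ofList rs ≤ Module.annihilator R (R ⧸ Ideal.ofList rs) :=
    Ideal.annihilator_quotient.ge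
  obtain ⟨ys, hylen, hymem, hys⟩ := hω.exists_isWeaklyRegular_linearMap hrs
    (hRann.trans (LinearMap.annihilator_le_of_injective _ hinj))
    (extVanish_left_of_exact_covariant hinj hsurj hexact
      (hω.extVanish_residue_quotient_self hrs)
      (hlen ▸ extVanish_residue_of_isRegular hzs hmem))
  let σ : (R ⧸ Ideal.ofList rs) →ₗ[R] ω →ₗ[R] ω ⧸ (Ideal.ofList rs • ⊤ : Submodule R ω) :=
    Submodule.liftQ (Ideal.ofList rs)
      (LinearMap.toSpanSingleton R _ (Submodule.mkQ (Ideal.ofList rs • ⊤ : Submodule R ω)))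
      fun r hr ↦ LinearMap.mem_ker.mpr (LinearMap.ext fun m ↦
        Module.mem_annihilator.mp ((hω.annihilator_quotient hrs).ge hr) (Submodule.mkQ _ m))
  let Ψ : (ω ⧸ (a • ⊤ : Submodule R ω)) →ₗ[R] LinearMap.ker g →ₗ[R]
      ω ⧸ (Ideal.ofList rs • ⊤ : Submodule R ω) :=
    Submodule.liftQ _ (σ ∘ₗ Submodule.subtype _).flip fun m hm ↦
      LinearMap.mem_ker.mpr (LinearMap.ext fun ⟨β, hβ⟩ ↦ by
        obtain ⟨r, rfl⟩ := Ideal.Quotient.mk_surjective β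
        have hr : r ∈ b := Ideal.Quotient.eq_zero_iff_mem.mp (LinearMap.mem_ker.mp hβ)
        exact (Submodule.Quotient.mk_eq_zero _).mpr
          (smul_mem_smul_top_of_mem_colonBy (hcolon ▸ hr) hm))
  have hΨ : Function.Surjective Ψ := by
    intro f
    obtain ⟨f', hf'⟩ := exists_comp_eq_of_extVanish (hω.isWeaklyRegular hrs) hinj hsurj hexact
      (fun r hr ↦ hRann (Ideal.subset_span hr))
      (hω.extVanish_length_add_one hrs hzs.1 hmem hlen) f
    obtain ⟨m, hm⟩ := Submodule.mkQ_surjective _ (f' 1)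
    refine ⟨Submodule.Quotient.mk m, LinearMap.ext fun ⟨β, hβ⟩ ↦ ?_⟩
    obtain ⟨r, rfl⟩ := Ideal.Quotient.mk_surjective β
    have hr : Ideal.Quotient.mk (Ideal.ofList rs) r = r • 1 := by
      rw [Algebra.smul_def, mul_one]
      rfl
    rw [← hf']
    refine Eq.trans (b := r • f' 1) ?_ ?_
    · rw [← hm]
      rfl
    · rw [← map_smul, ← hr]
      rfl
  have hfin : Module.Finite R (LinearMap.ker g →ₗ[R]
      ω ⧸ (Ideal.ofList rs • ⊤ : Submodule R ω)) := .of_surjective Ψ hΨ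
  have hKsub : Subsingleton (LinearMap.ker Ψ →ₗ[R]
      ω ⧸ (Ideal.ofList rs • ⊤ : Submodule R ω)) := by
    refine subsingleton_of_forall_eq 0 fun f ↦ ?_
    obtain ⟨f', hf'⟩ := exists_comp_eq_of_extVanish (hω.isWeaklyRegular hrs)
      (Submodule.subtype_injective (LinearMap.ker Ψ)) hΨ (LinearMap.exact_subtype_ker_map Ψ)
      (fun r hr ↦ hXann (Ideal.subset_span hr))
      (hω.extVanish_length_add_one hrs hys hymem hylen) f
    obtain ⟨r, hr⟩ := hω.exists_smul_eq hrs (f' ∘ₗ Submodule.mkQ _)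
    have hrb : r ∈ b := by
      rw [← hcolon]
      refine hω.mem_colonBy_of_smul_mem hrs fun m hm ↦ ?_
      rw [← Submodule.Quotient.mk_eq_zero, Submodule.Quotient.mk_smul, ← hr,
        LinearMap.comp_apply, Submodule.mkQ_apply, (Submodule.Quotient.mk_eq_zero _).mpr hm,
        map_zero]
    refine LinearMap.ext fun ⟨x, hx⟩ ↦ ?_
    obtain ⟨m, rfl⟩ := Submodule.mkQ_surjective _ x
    rw [← hf']
    refine (hr m).trans ?_
    exact LinearMap.congr_fun (LinearMap.mem_ker.mp hx)
      ⟨Ideal.Quotient.mk _ r, LinearMap.mem_ker.mpr (Ideal.Quotient.eq_zero_iff_mem.mpr hrb)⟩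
  have hK : LinearMap.ker Ψ = ⊥ := by
    by_contra hne
    have := (Submodule.nontrivial_iff_ne_bot).mpr hne
    have hKinj := Submodule.subtype_injective (LinearMap.ker Ψ)
    obtain ⟨p, hp⟩ := associatedPrimes.nonempty R (LinearMap.ker Ψ)
    refine hω.supportDim_quotient_ne_of_subsingleton_linearMap hrs hKsub
      (hXann.trans (LinearMap.annihilator_le_of_injective _ hKinj)) hp ?_
    rw [Module.supportDim_quotient_eq_ringKrullDim,
      hunm p (associatedPrimes.subset_of_injective hKinj hp), dim_eq_supportDim, hXdim]
  let e := LinearEquiv.ofBijective Ψ ⟨LinearMap.ker_eq_bot.mp hK, hΨ⟩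
  exact isCM_of_isWeaklyRegular ((e.isWeaklyRegular_congr ys).mpr hys) hymem
    (hylen ▸ hXdim)

end IsCanonicalOfDim

end CanonicalLinkage

/-- Let `R` be a Cohen–Macaulay local ring with canonical module `ω`, and let
`I ⊆ a ∩ b` be generated by an `R`-regular sequence with `a ≠ I`, `b ≠ I`, and
`I :_R a = b`.  Then `ω/aω` is Cohen–Macaulay iff `ω/aω` is unmixed and `R/b` is
Cohen–Macaulay. -/
theorem canonical_quot_cm_iff {R ω : Type u} [CommRing R] [IsLocalRing R] [IsNoetherianRing R]
    [AddCommGroup ω] [Module R ω] [Module.Finite R ω]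
    (hCM : (Module.grade R (maximalIdeal R) R : WithBot (WithTop ℕ)) = ringKrullDim R)
    (hω : IsCanonicalModule R ω)
    (a b I : Ideal R) (hIab : I ≤ a ⊓ b)
    (hreg : ∃ rs : List R, I = Ideal.ofList rs ∧ RingTheory.Sequence.IsRegular R rs)
    (haI : a ≠ I) (hbI : b ≠ I)
    (hcolon : (I : Submodule R R).colonBy a = b) :
    Module.IsCM R (ω ⧸ (a • ⊤ : Submodule R ω)) ↔
      (Module.IsUnmixed R (ω ⧸ (a • ⊤ : Submodule R ω)) ∧
        Module.IsCM R (R ⧸ b)) := by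
  obtain ⟨rs, rfl, hrs⟩ := hreg
  have hω' := CanonicalLinkage.isCanonicalOfDim_of_isCanonicalModule hCM hω
  have ha := hIab.trans inf_le_left
  have hb := hIab.trans inf_le_right
  refine ⟨fun h ↦ ⟨?_, ?_⟩, fun h ↦ ?_⟩
  · exact CanonicalLinkage.isUnmixed_of_isCM
      (hω'.supportDim_quotient_smul_top hrs ha hb hbI hcolon) h
  · exact hω'.isCM_quotient_of_isCM hrs ha hb haI hbI hcolon h
  · exact hω'.isCM_of_isUnmixed_of_isCM_quotient hrs ha hb haI hbI hcolon h.1 h.2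
end
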